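/- arXiv:2601.18249 — 2 statements merged into one kernel-verified Lean document; each statement's English description precedes it below -/
import Mathlib

section
/- Let 𝕜 be an algebraically closed field of characteristic zero. Let Ω_1,…,Ω_d ∈ 𝕜[x,y,z] be homogeneous polynomials with isolated singularities whose degrees are pairwise distinct and each at least 5, let ξ_1,…,ξ_d ∈ 𝕜, and set P = P_{Ω_1−ξ_1} ⊗_𝕜 ⋯ ⊗_𝕜 P_{Ω_d−ξ_d}. Let w be an integer with w ≤ min_i deg Ω_i − 4, and let R = ⊕_{i≥0} R_i be an ℕ-graded Poisson 𝕜-algebra which is an integral domain, with R_0 = 𝕜·1, each R_i finite-dimensional over 𝕜, R generated as a 𝕜-algebra by R_1, and {R_1, R_1} ⊆ R_{w+2}. Then every injective Poisson 𝕜-algebra morphism f : P → P ⊗_𝕜 R satisfies im(f) = P ⊗ 𝕜·1. -/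
open scoped TensorProduct

/-- A Poisson bracket on a commutative algebra `A` over `𝕜`: a bilinear, antisymmetric
bracket satisfying the Jacobi identity and the Leibniz rule. -/
structure PoissonStructure (𝕜 A : Type*) [CommRing 𝕜] [CommRing A] [Algebra 𝕜 A] where
  bracket : A → A → A
  add_left : ∀ a b c : A, bracket (a + b) c = bracket a c + bracket b c
  smul_left : ∀ (r : 𝕜) (a b : A), bracket (r • a) b = r • bracket a b
  antisymm : ∀ a b : A, bracket a b = - bracket b a
  jacobi : ∀ a b c : A,
    bracket a (bracket b c) + bracket b (bracket c a) + bracket c (bracket a b) = 0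
  leibniz : ∀ a b c : A, bracket a (b * c) = bracket a b * c + b * bracket a c

/-- `f` is a morphism of Poisson algebras. -/
def IsPoissonHom {𝕜 A B : Type*} [CommRing 𝕜] [CommRing A] [CommRing B]
    [Algebra 𝕜 A] [Algebra 𝕜 B]
    (PA : PoissonStructure 𝕜 A) (PB : PoissonStructure 𝕜 B) (f : A →ₐ[𝕜] B) : Prop :=
  ∀ a b : A, f (PA.bracket a b) = PB.bracket (f a) (f b)

/-- A Poisson algebra is Dixmier if every injective Poisson endomorphism is bijective. -/
def IsDixmier (𝕜 A : Type*) [CommRing 𝕜] [CommRing A] [Algebra 𝕜 A]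
    (PA : PoissonStructure 𝕜 A) : Prop :=
  ∀ f : A →ₐ[𝕜] A, IsPoissonHom PA PA f → Function.Injective f → Function.Bijective f

/-- The tensor-product Poisson bracket on `A ⊗[𝕜] B`. -/
def IsTensorBracket {𝕜 A B : Type*} [CommRing 𝕜] [CommRing A] [CommRing B]
    [Algebra 𝕜 A] [Algebra 𝕜 B] (PA : PoissonStructure 𝕜 A) (PB : PoissonStructure 𝕜 B)
    (PT : PoissonStructure 𝕜 (A ⊗[𝕜] B)) : Prop :=
  ∀ (a a' : A) (b b' : B),
    PT.bracket (a ⊗ₜ[𝕜] b) (a' ⊗ₜ[𝕜] b') =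
      PA.bracket a a' ⊗ₜ[𝕜] (b * b') + (a * a') ⊗ₜ[𝕜] PB.bracket b b'

/-- `A` is `R`-Dixmier: every injective Poisson morphism `A → A ⊗ R` has image `A ⊗ 𝕜·1`. -/
def IsRelDixmier (𝕜 A R : Type*) [CommRing 𝕜] [CommRing A] [CommRing R]
    [Algebra 𝕜 A] [Algebra 𝕜 R] (PA : PoissonStructure 𝕜 A)
    (PT : PoissonStructure 𝕜 (A ⊗[𝕜] R)) : Prop :=
  ∀ f : A →ₐ[𝕜] A ⊗[𝕜] R, IsPoissonHom PA PT f → Function.Injective f →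
    Set.range f = Set.range fun a : A => a ⊗ₜ[𝕜] (1 : R)

/-- A Poisson algebra is Poisson simple if its only Poisson ideals are `0` and the whole ring. -/
def IsPoissonSimple {𝕜 A : Type*} [CommRing 𝕜] [CommRing A] [Algebra 𝕜 A]
    (PA : PoissonStructure 𝕜 A) : Prop :=
  ∀ I : Ideal A, (∀ x : A, ∀ y ∈ I, PA.bracket x y ∈ I) → I = ⊥ ∨ I = ⊤

open MvPolynomial in
/-- The Jacobian Poisson bracket with potential `Ω` on `𝕜[x,y,z]`. -/
noncomputable def jacBracket {𝕜 : Type*} [CommRing 𝕜]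
    (Ω f g : MvPolynomial (Fin 3) 𝕜) : MvPolynomial (Fin 3) 𝕜 :=
  Matrix.det (Matrix.of
    ![![pderiv 0 f, pderiv 1 f, pderiv 2 f],
      ![pderiv 0 g, pderiv 1 g, pderiv 2 g],
      ![pderiv 0 Ω, pderiv 1 Ω, pderiv 2 Ω]])

open MvPolynomial in
/-- `Ω` has an isolated singularity at the origin. -/
def HasIsolatedSingularity {𝕜 : Type*} [Field 𝕜] (Ω : MvPolynomial (Fin 3) 𝕜) : Prop :=
  FiniteDimensional 𝕜
    (MvPolynomial (Fin 3) 𝕜 ⧸ Ideal.span {pderiv (0 : Fin 3) Ω, pderiv 1 Ω, pderiv 2 Ω})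

/-- The underlying commutative algebra of `P_{Ω-ξ} = 𝕜[x,y,z]/(Ω-ξ)`. -/
def PQuot (𝕜 : Type*) [CommRing 𝕜] (Ω : MvPolynomial (Fin 3) 𝕜) (ξ : 𝕜) : Type _ :=
  MvPolynomial (Fin 3) 𝕜 ⧸ Ideal.span {Ω - MvPolynomial.C ξ}

noncomputable instance {𝕜 : Type*} [CommRing 𝕜] (Ω : MvPolynomial (Fin 3) 𝕜) (ξ : 𝕜) :
    CommRing (PQuot 𝕜 Ω ξ) :=
  inferInstanceAs (CommRing (MvPolynomial (Fin 3) 𝕜 ⧸ Ideal.span {Ω - MvPolynomial.C ξ}))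

noncomputable instance {𝕜 : Type*} [CommRing 𝕜] (Ω : MvPolynomial (Fin 3) 𝕜) (ξ : 𝕜) :
    Algebra 𝕜 (PQuot 𝕜 Ω ξ) :=
  inferInstanceAs (Algebra 𝕜 (MvPolynomial (Fin 3) 𝕜 ⧸ Ideal.span {Ω - MvPolynomial.C ξ}))

/-- The canonical (surjective) projection `𝕜[x,y,z] → P_{Ω-ξ}`. -/
noncomputable def PQuot.mk {𝕜 : Type*} [CommRing 𝕜] (Ω : MvPolynomial (Fin 3) 𝕜) (ξ : 𝕜)
    (f : MvPolynomial (Fin 3) 𝕜) : PQuot 𝕜 Ω ξ :=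
  Ideal.Quotient.mk (Ideal.span {Ω - MvPolynomial.C ξ}) f

/-- `P` is the Poisson bracket on `P_{Ω-ξ}` induced from the Jacobian bracket on `A_Ω`. -/
def IsInducedBracket {𝕜 : Type*} [CommRing 𝕜] (Ω : MvPolynomial (Fin 3) 𝕜) (ξ : 𝕜)
    (P : PoissonStructure 𝕜 (PQuot 𝕜 Ω ξ)) : Prop :=
  ∀ f g : MvPolynomial (Fin 3) 𝕜,
    P.bracket (PQuot.mk Ω ξ f) (PQuot.mk Ω ξ g) = PQuot.mk Ω ξ (jacBracket Ω f g)

open PiTensorProduct in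
/-- The Poisson bracket on a finite tensor product `⨂[𝕜] i, A i`. -/
def IsPiTensorBracket {𝕜 : Type*} [CommRing 𝕜] {d : ℕ} {A : Fin d → Type*}
    [∀ i, CommRing (A i)] [∀ i, Algebra 𝕜 (A i)]
    (P : ∀ i, PoissonStructure 𝕜 (A i))
    (PT : PoissonStructure 𝕜 (⨂[𝕜] i, A i)) : Prop :=
  ∀ a b : (i : Fin d) → A i,
    PT.bracket (⨂ₜ[𝕜] i, a i) (⨂ₜ[𝕜] i, b i) =
      ∑ i : Fin d,
        ⨂ₜ[𝕜] j, Function.update (fun j => a j * b j) i ((P i).bracket (a i) (b i)) j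

/-- The Poisson-torus bracket associated to a matrix `Λ` on the Laurent polynomial ring
`𝕜[x₁^{±1},…,xₙ^{±1}]`, realized as the group algebra of `ℤⁿ`:
`{x^u, x^v} = (Σ_{i,j} uᵢ λᵢⱼ vⱼ) x^{u+v}`. -/
def IsTorusBracket {𝕜 : Type*} [CommRing 𝕜] (n : ℕ) (Λ : Matrix (Fin n) (Fin n) 𝕜)
    (P : PoissonStructure 𝕜 (AddMonoidAlgebra 𝕜 (Fin n → ℤ))) : Prop :=
  ∀ u v : Fin n → ℤ,
    P.bracket (AddMonoidAlgebra.single u (1 : 𝕜)) (AddMonoidAlgebra.single v (1 : 𝕜)) =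
      (∑ i, ∑ j, (u i : 𝕜) * Λ i j * (v j : 𝕜)) • AddMonoidAlgebra.single (u + v) (1 : 𝕜)

/-- `ν : A → ℤ ∪ {∞}` is a `w`-valuation on the Poisson algebra `A`. -/
structure IsWValuation {𝕜 A : Type*} [CommRing 𝕜] [CommRing A] [Algebra 𝕜 A]
    (P : PoissonStructure 𝕜 A) (w : ℤ) (ν : A → WithTop ℤ) : Prop where
  eq_top_iff : ∀ a : A, ν a = ⊤ ↔ a = 0
  scalar : ∀ c : 𝕜, c ≠ 0 → ν (algebraMap 𝕜 A c) = 0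
  map_mul : ∀ a b : A, ν (a * b) = ν a + ν b
  map_add : ∀ a b : A, min (ν a) (ν b) ≤ ν (a + b)
  map_bracket : ∀ a b : A, ν a + ν b ≤ ν (P.bracket a b) + (w : WithTop ℤ)

/-!
Give the coordinates of the `i`-th factor of `A = ⨂ P_{Ωᵢ-ξᵢ}` weight `a i` and multiply the
degrees of `R` by `b`, with `a i * (n i - 3) = b * max w 1`: every bracket on `A ⊗ R` then raises
degrees by at most `D = b * max w 1`, and `w ≤ n i - 4` gives `a i < b`. The associated graded
algebra embeds into `(⨂ 𝕜[x,y,z]/(Ωᵢ)) ⊗ R`, which is reduced because each `Ωᵢ` is squarefree. Let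
`f` be a Poisson morphism, and suppose it sends the coordinates of the `i`-th factor into degree
`m > a i`. Their brackets are the partial derivatives of `Ωᵢ`, so `f` sends these into degree
`2 * m + D`, which is less than `(n i - 1) * m`. Since a power of each coordinate is a combination
of these derivatives, the degree `m` symbols of the images are nilpotent, hence zero. Descending to
`m = a i < b`, only the constants of `R` survive, so `f` maps each of the finite-dimensional
filtered pieces of `A` into its own copy in `A ⊗ 𝕜`, and injectivity makes this an equality.
-/

section Filtration

variable {𝕜 A B : Type*} [CommRing 𝕜] [CommRing A] [Algebra 𝕜 A] [CommRing B] [Algebra 𝕜 B]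

/-- The part `F_{<m}` of a filtration `F`: the companion `F_lt` of Mathlib's `IsFiltration`. -/
def below (F : ℕ → Submodule 𝕜 A) (m : ℕ) : Submodule 𝕜 A :=
  ⨆ k < m, F k

lemma le_below (F : ℕ → Submodule 𝕜 A) {k m : ℕ} (h : k < m) : F k ≤ below F m :=
  le_iSup₂_of_le k h le_rfl

lemma below_le {F : ℕ → Submodule 𝕜 A} {m : ℕ} {N : Submodule 𝕜 A} (h : ∀ k < m, F k ≤ N) :
    below F m ≤ N :=
  iSup₂_le h

lemma map_mem_below {F : ℕ → Submodule 𝕜 A} {H : ℕ → Submodule 𝕜 B} (φ : A →ₗ[𝕜] B)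
    (hφ : ∀ k, ∀ a ∈ F k, φ a ∈ H k) {m : ℕ} {a : A} (ha : a ∈ below F m) :
    φ a ∈ below H m :=
  below_le (N := (below H m).comap φ) (fun k hk _ ha => le_below H hk (hφ k _ ha)) ha

/-- An increasing multiplicative filtration of an algebra by subspaces: Mathlib's
`IsRingFiltration`, with `F_lt` pinned to `below F`. -/
abbrev IsAlgebraFiltration (F : ℕ → Submodule 𝕜 A) : Prop :=
  IsRingFiltration F (below F)

lemma isAlgebraFiltration_of {F : ℕ → Submodule 𝕜 A} (mono : Monotone F) (one_mem : 1 ∈ F 0)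
    (mul_mem : ∀ i j, ∀ a ∈ F i, ∀ b ∈ F j, a * b ∈ F (i + j)) : IsAlgebraFiltration F where
  mono := mono
  is_le := le_below F
  is_sup _ _ := below_le
  one_mem := one_mem
  mul_mem i j {a b} ha hb := mul_mem i j a ha b hb

section

variable {F : ℕ → Submodule 𝕜 A} [hF : IsAlgebraFiltration F]

lemma mem_of_le {i j : ℕ} (hij : i ≤ j) {a : A} (ha : a ∈ F i) : a ∈ F j :=
  hF.mono hij ha

lemma monotone_filtration (F : ℕ → Submodule 𝕜 A) [hF : IsAlgebraFiltration F] : Monotone F :=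
  fun _ _ h => hF.mono h

lemma mem_of_mem_below {m : ℕ} {a : A} (ha : a ∈ below F m) : a ∈ F m :=
  IsFiltration.F_lt_le_F F (below F) m ha

lemma mul_mem_below {i j : ℕ} {a b : A} (ha : a ∈ F i) (hb : b ∈ below F j) :
    a * b ∈ below F (i + j) :=
  below_le (N := (below F (i + j)).comap (LinearMap.mulLeft 𝕜 a))
    (fun _ hk _ hb => le_below F (by lia) (SetLike.mul_mem_graded ha hb)) hb

lemma mul_mem_below_left {i j : ℕ} {a b : A} (ha : a ∈ below F i) (hb : b ∈ F j) :
    a * b ∈ below F (i + j) := by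
  rw [mul_comm, add_comm]
  exact mul_mem_below hb ha

lemma mul_sub_mul_mem_below {i j : ℕ} {a a' b b' : A} (ha : a ∈ F i) (hb' : b' ∈ F j)
    (haa' : a' - a ∈ below F i) (hbb' : b' - b ∈ below F j) :
    a' * b' - a * b ∈ below F (i + j) := by
  have h := add_mem (mul_mem_below_left haa' hb') (mul_mem_below ha hbb')
  convert h using 1
  ring

variable {ι : Type*} (t : Finset ι) {k : ι → ℕ} {a a' : ι → A}

lemma prod_mem_below (ha : ∀ i ∈ t, a i ∈ F (k i)) {j : ι} (hj : j ∈ t)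
    (haj : a j ∈ below F (k j)) : ∏ i ∈ t, a i ∈ below F (∑ i ∈ t, k i) := by
  classical
  rw [← Finset.mul_prod_erase t a hj, ← Finset.add_sum_erase t k hj]
  exact mul_mem_below_left haj
    (SetLike.prod_mem_graded F k a fun i hi => ha i (Finset.mem_of_mem_erase hi))

lemma prod_sub_prod_mem_below (ha : ∀ i ∈ t, a i ∈ F (k i))
    (haa' : ∀ i ∈ t, a' i - a i ∈ below F (k i)) :
    ∏ i ∈ t, a' i - ∏ i ∈ t, a i ∈ below F (∑ i ∈ t, k i) := by
  classical
  have ha' : ∀ i ∈ t, a' i ∈ F (k i) := fun i hi => by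
    simpa using add_mem (mem_of_mem_below (haa' i hi)) (ha i hi)
  induction t using Finset.induction_on with
  | empty => simp
  | insert i t hi ih =>
    simp only [Finset.forall_mem_insert] at ha haa' ha'
    rw [Finset.prod_insert hi, Finset.prod_insert hi, Finset.sum_insert hi]
    exact mul_sub_mul_mem_below ha.1 (SetLike.prod_mem_graded F k a' ha'.2) haa'.1
      (ih ha.2 haa'.2 ha'.2)

end

/-- Sets of elements of prescribed degrees that are closed under products; they span a filtration,
see `spanFiltration`. -/
class IsGradedFamily (T : ℕ → Set A) : Prop where
  one_mem : 1 ∈ T 0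
  mul_mem {i j : ℕ} {a b : A} (ha : a ∈ T i) (hb : b ∈ T j) : a * b ∈ T (i + j)

/-- The filtration whose `m`-th piece is spanned by the elements of `T k` for `k ≤ m`. -/
def spanFiltration (𝕜 : Type*) [CommRing 𝕜] [Algebra 𝕜 A] (T : ℕ → Set A) (m : ℕ) :
    Submodule 𝕜 A :=
  Submodule.span 𝕜 (⋃ k ≤ m, T k)

lemma mem_spanFiltration {T : ℕ → Set A} {k m : ℕ} (hk : k ≤ m) {a : A} (ha : a ∈ T k) :
    a ∈ spanFiltration 𝕜 T m :=
  Submodule.subset_span (Set.mem_biUnion hk ha)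

lemma spanFiltration_le {T : ℕ → Set A} {m : ℕ} {N : Submodule 𝕜 A}
    (h : ∀ k ≤ m, ∀ a ∈ T k, a ∈ N) : spanFiltration 𝕜 T m ≤ N :=
  Submodule.span_le.2 (Set.iUnion₂_subset h)

lemma spanFiltration_mono (T : ℕ → Set A) : Monotone (spanFiltration 𝕜 T) := fun _ _ h =>
  spanFiltration_le fun _ hk _ ha => mem_spanFiltration (hk.trans h) ha

lemma bilin_mem_of_mem_spanFiltration {T T' : ℕ → Set A} (φ : A →ₗ[𝕜] A →ₗ[𝕜] B)
    {N : Submodule 𝕜 B} {i j : ℕ} (h : ∀ k ≤ i, ∀ l ≤ j, ∀ a ∈ T k, ∀ b ∈ T' l, φ a b ∈ N)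
    {a b : A} (ha : a ∈ spanFiltration 𝕜 T i) (hb : b ∈ spanFiltration 𝕜 T' j) : φ a b ∈ N :=
  spanFiltration_le (N := N.comap (φ.flip b)) (fun k hk a ha =>
    spanFiltration_le (N := N.comap (φ a)) (fun l hl b hb => h k hk l hl a ha b hb) hb) ha

instance (T : ℕ → Set A) [IsGradedFamily T] : IsAlgebraFiltration (spanFiltration 𝕜 T) :=
  isAlgebraFiltration_of (spanFiltration_mono T)
    (mem_spanFiltration le_rfl IsGradedFamily.one_mem) fun _ _ _ ha _ hb =>
    bilin_mem_of_mem_spanFiltration (LinearMap.mul 𝕜 A) (fun _ hk _ hl _ ha _ hb =>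
      mem_spanFiltration (add_le_add hk hl) (IsGradedFamily.mul_mem ha hb)) ha hb

lemma exists_mem_spanFiltration {T : ℕ → Set A}
    (hT : Submodule.span 𝕜 (⋃ k, T k) = ⊤) (a : A) : ∃ m, a ∈ spanFiltration 𝕜 T m := by
  have hle : Submodule.span 𝕜 (⋃ k, T k) ≤ ⨆ m, spanFiltration 𝕜 T m :=
    Submodule.span_le.2 (Set.iUnion_subset fun k _ ha =>
      Submodule.mem_iSup_of_mem k (mem_spanFiltration le_rfl ha))
  exact (Submodule.mem_iSup_of_directed _ (spanFiltration_mono T).directed_le).1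
    (hle (hT ▸ Submodule.mem_top))

/-- The filtration `m ↦ F ⌊m / c⌋`, in which degrees are multiplied by `c`. -/
def rescale (c : ℕ) (F : ℕ → Submodule 𝕜 A) (m : ℕ) : Submodule 𝕜 A :=
  F (m / c)

instance (c : ℕ) (F : ℕ → Submodule 𝕜 A) [hF : IsAlgebraFiltration F] :
    IsAlgebraFiltration (rescale c F) :=
  isAlgebraFiltration_of (fun _ _ h => hF.mono (Nat.div_le_div_right h))
    (by simpa [rescale] using SetLike.one_mem_graded F) fun _ _ _ ha _ hb =>
    hF.mono Nat.div_add_div_le_add_div (SetLike.mul_mem_graded ha hb)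

lemma exists_mem_rescale {c : ℕ} (hc : 0 < c) {F : ℕ → Submodule 𝕜 A} {a : A}
    (ha : ∃ m, a ∈ F m) : ∃ m, a ∈ rescale c F m := by
  obtain ⟨m, hm⟩ := ha
  exact ⟨m * c, by rwa [rescale, Nat.mul_div_cancel m hc]⟩

lemma below_le_below_rescale {c : ℕ} (hc : 0 < c) (F : ℕ → Submodule 𝕜 A) (m : ℕ) :
    below F (m / c) ≤ below (rescale c F) m :=
  below_le fun k hk => by
    have hkm : c * k < m :=
      (Nat.mul_lt_mul_of_pos_left hk hc).trans_le (Nat.mul_div_le m c)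
    simpa [rescale, hc] using le_below (rescale c F) hkm

lemma le_below_rescale {c : ℕ} (hc : 0 < c) (F : ℕ → Submodule 𝕜 A) {m : ℕ} (hm : ¬ c ∣ m) :
    F (m / c) ≤ below (rescale c F) m := by
  have hlt : c * (m / c) < m :=
    (Nat.mul_div_le m c).lt_of_ne fun h => hm ⟨m / c, h.symm⟩
  simpa [rescale, hc] using le_below (rescale c F) hlt

/-- The image of a filtration under an algebra homomorphism. -/
def mapFiltration (φ : A →ₐ[𝕜] B) (F : ℕ → Submodule 𝕜 A) (m : ℕ) : Submodule 𝕜 B :=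
  (F m).map φ.toLinearMap

lemma map_mem_mapFiltration (φ : A →ₐ[𝕜] B) {F : ℕ → Submodule 𝕜 A} {m : ℕ} {a : A}
    (ha : a ∈ F m) : φ a ∈ mapFiltration φ F m :=
  Submodule.mem_map_of_mem (f := φ.toLinearMap) ha

instance (φ : A →ₐ[𝕜] B) (F : ℕ → Submodule 𝕜 A) [hF : IsAlgebraFiltration F] :
    IsAlgebraFiltration (mapFiltration φ F) :=
  isAlgebraFiltration_of (fun _ _ h => Submodule.map_mono (hF.mono h))
    ⟨1, SetLike.one_mem_graded F, map_one φ⟩ <| by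
    rintro i j _ ⟨a, ha, rfl⟩ _ ⟨b, hb, rfl⟩
    exact ⟨a * b, SetLike.mul_mem_graded ha hb, map_mul φ a b⟩

end Filtration

lemma div_add_div_lt_add_div {c i j : ℕ} (h : ¬ (c ∣ i ∧ c ∣ j)) (hadd : c ∣ i + j) :
    i / c + j / c < (i + j) / c := by
  refine lt_of_le_of_ne Nat.div_add_div_le_add_div fun heq => h ?_
  have hsum := Nat.mul_div_cancel' hadd
  rw [← heq, mul_add] at hsum
  have hi := Nat.div_add_mod i c
  have hj := Nat.div_add_mod j c
  exact ⟨Nat.dvd_of_mod_eq_zero (by lia), Nat.dvd_of_mod_eq_zero (by lia)⟩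

section Symbol

variable {𝕜 A G : Type*} [CommRing 𝕜] [CommRing A] [Algebra 𝕜 A] [CommRing G] [Algebra 𝕜 G]

/-- The maps `σ m` induce an embedding of the associated graded algebra of `F` into `G`, and the
maps `s m` invert it: `σ m` kills `F_{<m}`, while `s m (σ m a) = a` modulo `F_{<m}` for `a ∈ F m`.
The maps `σ m` are linear on all of `A`, but only their values on `F m` matter; the condition on
`s j (σ i a)` for `j ≠ i` says that the images of the pieces of the associated graded are
independent in `G`. -/
structure IsSymbol (F : ℕ → Submodule 𝕜 A) (σ : ℕ → A →ₗ[𝕜] G) (s : ℕ → G →ₗ[𝕜] A) : Prop where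
  map_one : σ 0 1 = 1
  map_mul {i j : ℕ} {a b : A} (ha : a ∈ F i) (hb : b ∈ F j) : σ (i + j) (a * b) = σ i a * σ j b
  map_eq_zero {i j : ℕ} {a : A} (ha : a ∈ F i) (hij : i < j) : σ j a = 0
  lift_sub_mem {i : ℕ} {a : A} (ha : a ∈ F i) : s i (σ i a) - a ∈ below F i
  lift_mem_below {i j : ℕ} {a : A} (ha : a ∈ F i) (hij : j ≠ i) : s j (σ i a) ∈ below F j

namespace IsSymbol

variable {F : ℕ → Submodule 𝕜 A} {σ : ℕ → A →ₗ[𝕜] G} {s : ℕ → G →ₗ[𝕜] A}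

lemma eq_zero_of_mem_below (h : IsSymbol F σ s) {m : ℕ} {a : A} (ha : a ∈ below F m) :
    σ m a = 0 :=
  below_le (N := LinearMap.ker (σ m)) (fun _ hk _ ha => h.map_eq_zero ha hk) ha

lemma mem_below (h : IsSymbol F σ s) {m : ℕ} {a : A} (ha : a ∈ F m) (hσ : σ m a = 0) :
    a ∈ below F m := by
  simpa [hσ] using h.lift_sub_mem ha

lemma lift_mem [IsAlgebraFiltration F] (h : IsSymbol F σ s) {i : ℕ} (j : ℕ) {a : A}
    (ha : a ∈ F i) : s j (σ i a) ∈ F j := by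
  obtain rfl | hij := eq_or_ne j i
  · simpa using add_mem (mem_of_mem_below (h.lift_sub_mem ha)) ha
  · exact mem_of_mem_below (h.lift_mem_below ha hij)

lemma map_pow [IsAlgebraFiltration F] (h : IsSymbol F σ s) {m : ℕ} {a : A} (ha : a ∈ F m)
    (N : ℕ) : σ (N * m) (a ^ N) = σ m a ^ N := by
  induction N with
  | zero => simpa using h.map_one
  | succ N ih =>
    have hN : a ^ N ∈ F (N * m) := SetLike.pow_mem_graded N ha
    rw [Nat.succ_mul, pow_succ, pow_succ, h.map_mul hN ha, ih]

lemma mem_below_of_pow_mem_below [IsAlgebraFiltration F] [IsReduced G] (h : IsSymbol F σ s)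
    {m N : ℕ} {a : A} (ha : a ∈ F m) (hN : a ^ N ∈ below F (N * m)) : a ∈ below F m :=
  h.mem_below ha <| eq_zero_of_pow_eq_zero (n := N) <| by
    rw [← h.map_pow ha, h.eq_zero_of_mem_below hN]

lemma rescale [IsAlgebraFiltration F] (h : IsSymbol F σ s) {c : ℕ} (hc : 0 < c) :
    IsSymbol (rescale c F) (fun m => if c ∣ m then σ (m / c) else 0)
      (fun m => if c ∣ m then s (m / c) else 0) where
  map_one := by simpa using h.map_one
  map_mul {i j a b} ha hb := by
    have hab : a * b ∈ F (i / c + j / c) := SetLike.mul_mem_graded ha hb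
    by_cases hij : c ∣ i ∧ c ∣ j
    · obtain ⟨hi, hj⟩ := hij
      simp only [hi, hj, dvd_add hi hj, if_true, Nat.add_div_of_dvd_right hi]
      exact h.map_mul ha hb
    · have hzero : (if c ∣ i then σ (i / c) else 0) a * (if c ∣ j then σ (j / c) else 0) b = 0 := by
        rcases not_and_or.1 hij with hi | hj <;> simp [*]
      rw [hzero]
      split_ifs with hadd
      · exact h.map_eq_zero hab (div_add_div_lt_add_div hij hadd)
      · rfl
  map_eq_zero {i j a} ha hij := by
    split_ifs with hj
    · exact h.map_eq_zero ha ((Nat.div_lt_iff_lt_mul hc).2 (by rwa [Nat.div_mul_cancel hj]))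
    · rfl
  lift_sub_mem {i a} ha := by
    by_cases hi : c ∣ i
    · simpa only [if_pos hi] using below_le_below_rescale hc F i (h.lift_sub_mem ha)
    · simpa [hi] using le_below_rescale hc F hi ha
  lift_mem_below {i j a} ha hij := by
    by_cases hi : c ∣ i <;> by_cases hj : c ∣ j <;> simp only [hi, hj, if_true, if_false,
      LinearMap.zero_apply, map_zero, zero_mem]
    exact below_le_below_rescale hc F j
      (h.lift_mem_below ha fun h => hij ((Nat.div_left_inj hj hi).1 h))

end IsSymbol

lemma isSymbol_spanFiltration {T : ℕ → Set A} [IsGradedFamily T] {σ : ℕ → A →ₗ[𝕜] G}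
    {s : ℕ → G →ₗ[𝕜] A} (map_one : σ 0 1 = 1)
    (map_mul : ∀ i j, ∀ a ∈ T i, ∀ b ∈ T j, σ (i + j) (a * b) = σ i a * σ j b)
    (map_eq_zero : ∀ i j, i < j → ∀ a ∈ T i, σ j a = 0)
    (lift_sub_mem : ∀ i, ∀ a ∈ T i, s i (σ i a) - a ∈ below (spanFiltration 𝕜 T) i)
    (lift_mem_below : ∀ i j, j ≠ i → ∀ a ∈ T i, s j (σ i a) ∈ below (spanFiltration 𝕜 T) j) :
    IsSymbol (spanFiltration 𝕜 T) σ s where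
  map_one := map_one
  map_eq_zero ha hij := spanFiltration_le (N := LinearMap.ker (σ _))
    (fun k hk a ha => map_eq_zero k _ (hk.trans_lt hij) a ha) ha
  map_mul {i j a b} ha hb := by
    let φ : A →ₗ[𝕜] A →ₗ[𝕜] G :=
      (LinearMap.mul 𝕜 A).compr₂ (σ (i + j)) - (LinearMap.mul 𝕜 G).compl₁₂ (σ i) (σ j)
    suffices φ a b ∈ (⊥ : Submodule 𝕜 G) from sub_eq_zero.1 this
    refine bilin_mem_of_mem_spanFiltration φ (fun k hk l hl x hx y hy => ?_) ha hb
    have hxy : x * y ∈ T (k + l) := IsGradedFamily.mul_mem hx hy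
    change σ (i + j) (x * y) - σ i x * σ j y = 0
    rcases hk.eq_or_lt with rfl | hk
    · rcases hl.eq_or_lt with rfl | hl
      · rw [map_mul k l x hx y hy, sub_self]
      · rw [map_eq_zero _ _ (by lia) _ hxy, map_eq_zero l j hl y hy, mul_zero, sub_zero]
    · rw [map_eq_zero _ _ (by lia) _ hxy, map_eq_zero k i hk x hx, zero_mul, sub_zero]
  lift_sub_mem {i a} ha := by
    refine spanFiltration_le (N := (below (spanFiltration 𝕜 T) i).comap (s i ∘ₗ σ i - LinearMap.id))
      (fun k hk x hx => ?_) ha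
    change s i (σ i x) - x ∈ below (spanFiltration 𝕜 T) i
    rcases hk.eq_or_lt with rfl | hk
    · exact lift_sub_mem k x hx
    · rw [map_eq_zero k i hk x hx, _root_.map_zero, zero_sub]
      exact neg_mem (le_below _ hk (mem_spanFiltration le_rfl hx))
  lift_mem_below {i j a} ha hij := by
    refine spanFiltration_le (N := (below (spanFiltration 𝕜 T) j).comap (s j ∘ₗ σ i))
      (fun k hk x hx => ?_) ha
    change s j (σ i x) ∈ below (spanFiltration 𝕜 T) j
    rcases hk.eq_or_lt with rfl | hk
    · exact lift_mem_below k j hij x hx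
    · rw [map_eq_zero k i hk x hx, _root_.map_zero]
      exact zero_mem _

end Symbol

section TensorProduct

open Finset.HasAntidiagonal (antidiagonal mem_antidiagonal)

variable {𝕜 A B : Type*} [CommRing 𝕜] [CommRing A] [Algebra 𝕜 A] [CommRing B] [Algebra 𝕜 B]

/-- The pure tensors `a ⊗ b` with `a ∈ F i`, `b ∈ H j` and `i + j = m`. -/
def tensorFamily (F : ℕ → Submodule 𝕜 A) (H : ℕ → Submodule 𝕜 B) (m : ℕ) : Set (A ⊗[𝕜] B) :=
  {x | ∃ i j, i + j = m ∧ ∃ a ∈ F i, ∃ b ∈ H j, x = a ⊗ₜ b}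

/-- The tensor product of two filtrations. -/
abbrev tensorFiltration (F : ℕ → Submodule 𝕜 A) (H : ℕ → Submodule 𝕜 B) :
    ℕ → Submodule 𝕜 (A ⊗[𝕜] B) :=
  spanFiltration 𝕜 (tensorFamily F H)

variable {F : ℕ → Submodule 𝕜 A} {H : ℕ → Submodule 𝕜 B}

lemma tmul_mem_tensorFamily {i j : ℕ} {a : A} {b : B} (ha : a ∈ F i) (hb : b ∈ H j) :
    a ⊗ₜ b ∈ tensorFamily F H (i + j) :=
  ⟨i, j, rfl, a, ha, b, hb, rfl⟩

instance [IsAlgebraFiltration F] [IsAlgebraFiltration H] : IsGradedFamily (tensorFamily F H) where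
  one_mem := tmul_mem_tensorFamily (i := 0) (j := 0) (SetLike.one_mem_graded F)
    (SetLike.one_mem_graded H)
  mul_mem := by
    rintro _ _ _ _ ⟨i, j, rfl, a, ha, b, hb, rfl⟩ ⟨i', j', rfl, a', ha', b', hb', rfl⟩
    rw [Algebra.TensorProduct.tmul_mul_tmul, add_add_add_comm]
    exact tmul_mem_tensorFamily (SetLike.mul_mem_graded ha ha') (SetLike.mul_mem_graded hb hb')

lemma exists_mem_tensorFiltration (hF : ∀ a, ∃ m, a ∈ F m) (hH : ∀ b, ∃ m, b ∈ H m)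
    (x : A ⊗[𝕜] B) : ∃ m, x ∈ tensorFiltration F H m := by
  refine exists_mem_spanFiltration ?_ x
  rw [← top_le_iff, ← TensorProduct.span_tmul_eq_top, Submodule.span_le]
  rintro _ ⟨a, b, rfl⟩
  obtain ⟨i, ha⟩ := hF a
  obtain ⟨j, hb⟩ := hH b
  exact Submodule.subset_span (Set.mem_iUnion_of_mem _ (tmul_mem_tensorFamily ha hb))

lemma tensorFiltration_le_mapFiltration_includeLeft {m : ℕ} (hF : Monotone F)
    (hH : ∀ j ≤ m, H j ≤ 1) :
    tensorFiltration F H m ≤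
      mapFiltration (Algebra.TensorProduct.includeLeft : A →ₐ[𝕜] A ⊗[𝕜] B) F m := by
  refine spanFiltration_le ?_
  rintro _ hk _ ⟨i, j, rfl, a, ha, b, hb, rfl⟩
  obtain ⟨r, rfl⟩ := Submodule.mem_one.1 (hH j (by lia) hb)
  refine ⟨r • a, hF (by lia) ((F i).smul_mem r ha), ?_⟩
  change (r • a) ⊗ₜ[𝕜] (1 : B) = a ⊗ₜ algebraMap 𝕜 B r
  rw [TensorProduct.smul_tmul, Algebra.algebraMap_eq_smul_one]

lemma tmul_one_mem_tensorFiltration [IsAlgebraFiltration H] {i : ℕ} {a : A} (ha : a ∈ F i) :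
    a ⊗ₜ 1 ∈ tensorFiltration F H i :=
  mem_spanFiltration le_rfl (tmul_mem_tensorFamily (j := 0) ha (SetLike.one_mem_graded H))

lemma one_tmul_mem_tensorFiltration [IsAlgebraFiltration F] {j : ℕ} {b : B} (hb : b ∈ H j) :
    1 ⊗ₜ b ∈ tensorFiltration F H j :=
  mem_spanFiltration (zero_add j).le (tmul_mem_tensorFamily (SetLike.one_mem_graded F) hb)

lemma tmul_one_mem_below [IsAlgebraFiltration H] {i : ℕ} {a : A} (ha : a ∈ below F i) :
    a ⊗ₜ 1 ∈ below (tensorFiltration F H) i :=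
  map_mem_below (Algebra.TensorProduct.includeLeft : A →ₐ[𝕜] A ⊗[𝕜] B).toLinearMap
    (fun _ _ ha => tmul_one_mem_tensorFiltration ha) ha

lemma one_tmul_mem_below [IsAlgebraFiltration F] {j : ℕ} {b : B} (hb : b ∈ below H j) :
    1 ⊗ₜ b ∈ below (tensorFiltration F H) j :=
  map_mem_below (Algebra.TensorProduct.includeRight : B →ₐ[𝕜] A ⊗[𝕜] B).toLinearMap
    (fun _ _ hb => one_tmul_mem_tensorFiltration hb) hb

lemma tmul_eq_mul (a : A) (b : B) : a ⊗ₜ[𝕜] b = (a ⊗ₜ 1) * (1 ⊗ₜ b) := by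
  rw [Algebra.TensorProduct.tmul_mul_tmul, mul_one, one_mul]

section

variable [IsAlgebraFiltration F] [IsAlgebraFiltration H]

lemma tmul_mem_below_left {i j : ℕ} {a : A} {b : B} (ha : a ∈ below F i) (hb : b ∈ H j) :
    a ⊗ₜ b ∈ below (tensorFiltration F H) (i + j) := by
  rw [tmul_eq_mul]
  exact mul_mem_below_left (tmul_one_mem_below ha) (one_tmul_mem_tensorFiltration hb)

lemma tmul_mem_below_right {i j : ℕ} {a : A} {b : B} (ha : a ∈ F i) (hb : b ∈ below H j) :
    a ⊗ₜ b ∈ below (tensorFiltration F H) (i + j) := by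
  rw [tmul_eq_mul]
  exact mul_mem_below (tmul_one_mem_tensorFiltration ha) (one_tmul_mem_below hb)

lemma tmul_sub_tmul_mem_below {i j : ℕ} {a a' : A} {b b' : B} (ha : a ∈ F i) (hb' : b' ∈ H j)
    (haa' : a' - a ∈ below F i) (hbb' : b' - b ∈ below H j) :
    a' ⊗ₜ b' - a ⊗ₜ b ∈ below (tensorFiltration F H) (i + j) := by
  rw [tmul_eq_mul, tmul_eq_mul a]
  refine mul_sub_mul_mem_below (tmul_one_mem_tensorFiltration ha)
    (one_tmul_mem_tensorFiltration hb') ?_ ?_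
  · rw [← TensorProduct.sub_tmul]
    exact tmul_one_mem_below haa'
  · rw [← TensorProduct.tmul_sub]
    exact one_tmul_mem_below hbb'

end

variable {G G' : Type*} [CommRing G] [Algebra 𝕜 G] [CommRing G'] [Algebra 𝕜 G']
  {σ : ℕ → A →ₗ[𝕜] G} {s : ℕ → G →ₗ[𝕜] A} {σ' : ℕ → B →ₗ[𝕜] G'} {s' : ℕ → G' →ₗ[𝕜] B}

/-- The degree `m` part `∑_{i + j = m} σ i ⊗ σ' j` of the tensor product of two families of
maps. -/
noncomputable def tensorSymbol (σ : ℕ → A →ₗ[𝕜] G) (σ' : ℕ → B →ₗ[𝕜] G') (m : ℕ) :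
    A ⊗[𝕜] B →ₗ[𝕜] G ⊗[𝕜] G' :=
  ∑ p ∈ antidiagonal m, TensorProduct.map (σ p.1) (σ' p.2)

lemma tensorSymbol_apply_tmul (m : ℕ) (a : A) (b : B) :
    tensorSymbol σ σ' m (a ⊗ₜ b) = ∑ p ∈ antidiagonal m, σ p.1 a ⊗ₜ σ' p.2 b := by
  simp [tensorSymbol]

lemma IsSymbol.tensorSymbol_tmul (h : IsSymbol F σ s) (h' : IsSymbol H σ' s') {i j : ℕ} {a : A}
    {b : B} (ha : a ∈ F i) (hb : b ∈ H j) :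
    tensorSymbol σ σ' (i + j) (a ⊗ₜ b) = σ i a ⊗ₜ σ' j b := by
  rw [tensorSymbol_apply_tmul, Finset.sum_eq_single (i, j)]
  · rintro ⟨i', j'⟩ hp hne
    have hsum : i' + j' = i + j := mem_antidiagonal.1 hp
    rcases lt_trichotomy i i' with hi | rfl | hi
    · rw [h.map_eq_zero ha hi, TensorProduct.zero_tmul]
    · exact absurd (by rw [Nat.add_left_cancel hsum]) hne
    · rw [h'.map_eq_zero hb (show j < j' by lia), TensorProduct.tmul_zero]
  · simp

lemma IsSymbol.tensor [IsAlgebraFiltration F] [IsAlgebraFiltration H] (h : IsSymbol F σ s)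
    (h' : IsSymbol H σ' s') :
    IsSymbol (tensorFiltration F H) (tensorSymbol σ σ') (tensorSymbol s s') := by
  have hlift : ∀ {i j i' j' a b}, a ∈ F i → b ∈ H j → (i', j') ≠ (i, j) →
      s i' (σ i a) ⊗ₜ s' j' (σ' j b) ∈ below (tensorFiltration F H) (i' + j') := by
    intro i j i' j' a b ha hb hne
    by_cases hi : i' = i
    · exact tmul_mem_below_right (h.lift_mem i' ha)
        (h'.lift_mem_below hb fun hj => hne (by rw [hi, hj]))
    · exact tmul_mem_below_left (h.lift_mem_below ha hi) (h'.lift_mem j' hb)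
  refine isSymbol_spanFiltration ?_ ?_ ?_ ?_ ?_
  · simp [Algebra.TensorProduct.one_def, tensorSymbol_apply_tmul, h.map_one, h'.map_one]
  · rintro _ _ _ ⟨i, j, rfl, a, ha, b, hb, rfl⟩ _ ⟨i', j', rfl, a', ha', b', hb', rfl⟩
    rw [Algebra.TensorProduct.tmul_mul_tmul, add_add_add_comm,
      h.tensorSymbol_tmul h' (SetLike.mul_mem_graded ha ha') (SetLike.mul_mem_graded hb hb'),
      h.tensorSymbol_tmul h' ha hb, h.tensorSymbol_tmul h' ha' hb', h.map_mul ha ha',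
      h'.map_mul hb hb', Algebra.TensorProduct.tmul_mul_tmul]
  · rintro _ m hm _ ⟨i, j, rfl, a, ha, b, hb, rfl⟩
    rw [tensorSymbol_apply_tmul]
    refine Finset.sum_eq_zero fun p hp => ?_
    have hp : p.1 + p.2 = m := mem_antidiagonal.1 hp
    rcases lt_or_ge i p.1 with hi | hi
    · rw [h.map_eq_zero ha hi, TensorProduct.zero_tmul]
    · rw [h'.map_eq_zero hb (show j < p.2 by lia), TensorProduct.tmul_zero]
  · rintro _ _ ⟨i, j, rfl, a, ha, b, hb, rfl⟩
    rw [h.tensorSymbol_tmul h' ha hb, tensorSymbol_apply_tmul,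
      ← Finset.add_sum_erase _ _ (mem_antidiagonal.2 (rfl : (i, j).1 + (i, j).2 = i + j)),
      add_sub_right_comm]
    refine add_mem (tmul_sub_tmul_mem_below ha (h'.lift_mem j hb) (h.lift_sub_mem ha)
      (h'.lift_sub_mem hb)) (sum_mem fun p hp => ?_)
    obtain ⟨hne, hp⟩ := Finset.mem_erase.1 hp
    exact mem_antidiagonal.1 hp ▸ hlift ha hb hne
  · rintro _ m hm _ ⟨i, j, rfl, a, ha, b, hb, rfl⟩
    rw [h.tensorSymbol_tmul h' ha hb, tensorSymbol_apply_tmul]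
    refine sum_mem fun p hp => ?_
    obtain rfl := mem_antidiagonal.1 hp
    exact hlift ha hb fun hne => hm (congrArg (fun p => p.1 + p.2) hne)

end TensorProduct

lemma exists_lt_of_sum_le {ι : Type*} [Fintype ι] {κ κ' : ι → ℕ} (hsum : ∑ i, κ i ≤ ∑ i, κ' i)
    (hne : κ' ≠ κ) : ∃ i, κ i < κ' i := by
  by_contra! hle
  have heq := (Finset.sum_eq_sum_iff_of_le fun i _ => hle i).1
    ((Finset.sum_le_sum fun i _ => hle i).antisymm hsum)
  exact hne (funext fun i => heq i (Finset.mem_univ i))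

section PiTensorProduct

variable {ι 𝕜 : Type*} [CommRing 𝕜] {A : ι → Type*} [∀ i, CommRing (A i)] [∀ i, Algebra 𝕜 (A i)]

lemma tprod_eq_prod_singleAlgHom [Fintype ι] [DecidableEq ι] (a : ∀ i, A i) :
    (⨂ₜ[𝕜] i, a i) = ∏ i, PiTensorProduct.singleAlgHom (R := 𝕜) i (a i) := by
  simp only [PiTensorProduct.singleAlgHom_apply, ← PiTensorProduct.tprod_prod]
  exact congrArg _ (Finset.univ_prod_mulSingle a).symm

variable [Fintype ι]

/-- The pure tensors `⨂ a i` with `a i ∈ F i (κ i)` and `∑ κ i = m`. -/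
def piFamily (F : ∀ i, ℕ → Submodule 𝕜 (A i)) (m : ℕ) : Set (⨂[𝕜] i, A i) :=
  {x | ∃ κ : ι → ℕ, ∑ i, κ i = m ∧ ∃ a : ∀ i, A i, (∀ i, a i ∈ F i (κ i)) ∧ x = ⨂ₜ[𝕜] i, a i}

/-- The tensor product of a finite family of filtrations. -/
abbrev piFiltration (F : ∀ i, ℕ → Submodule 𝕜 (A i)) : ℕ → Submodule 𝕜 (⨂[𝕜] i, A i) :=
  spanFiltration 𝕜 (piFamily F)

variable {F : ∀ i, ℕ → Submodule 𝕜 (A i)}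

lemma tprod_mem_piFamily {κ : ι → ℕ} {a : ∀ i, A i} (ha : ∀ i, a i ∈ F i (κ i)) :
    (⨂ₜ[𝕜] i, a i) ∈ piFamily F (∑ i, κ i) :=
  ⟨κ, rfl, a, ha, rfl⟩

lemma exists_mem_piFiltration (hF : ∀ i a, ∃ m, a ∈ F i m) (x : ⨂[𝕜] i, A i) :
    ∃ m, x ∈ piFiltration F m := by
  refine exists_mem_spanFiltration ?_ x
  rw [← top_le_iff, ← PiTensorProduct.span_tprod_eq_top, Submodule.span_le]
  rintro _ ⟨a, rfl⟩
  choose κ hκ using fun i => hF i (a i)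
  exact Submodule.subset_span (Set.mem_iUnion_of_mem _ (tprod_mem_piFamily hκ))

lemma piFiltration_finite [IsNoetherianRing 𝕜] (hmono : ∀ i, Monotone (F i))
    (hfin : ∀ i m, Module.Finite 𝕜 (F i m)) (m : ℕ) : Module.Finite 𝕜 (piFiltration F m) := by
  have hle : piFiltration F m ≤
      LinearMap.range (PiTensorProduct.map fun i => (F i m).subtype) := by
    refine spanFiltration_le ?_
    rintro _ hk _ ⟨κ, rfl, a, ha, rfl⟩
    have hκ : ∀ i, κ i ≤ m := fun i =>
      (Finset.single_le_sum (fun _ _ => Nat.zero_le _) (Finset.mem_univ i)).trans hk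
    exact ⟨⨂ₜ[𝕜] i, ⟨a i, hmono i (hκ i) (ha i)⟩, by simp⟩
  exact Module.Finite.of_injective _ (Submodule.inclusion_injective hle)

lemma map_mem_of_mem_piFiltration [DecidableEq ι] {C : Type*} [CommRing C] [Algebra 𝕜 C]
    {H : ℕ → Submodule 𝕜 C} [hH : IsAlgebraFiltration H] (φ : (⨂[𝕜] i, A i) →ₐ[𝕜] C)
    (hφ : ∀ i k, ∀ a ∈ F i k, φ (PiTensorProduct.singleAlgHom (R := 𝕜) i a) ∈ H k) {m : ℕ}
    {x : ⨂[𝕜] i, A i} (hx : x ∈ piFiltration F m) : φ x ∈ H m := by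
  refine spanFiltration_le (N := (H m).comap φ.toLinearMap) ?_ hx
  rintro _ hk _ ⟨κ, rfl, a, ha, rfl⟩
  have hprod : φ (⨂ₜ[𝕜] i, a i) ∈ H (∑ i, κ i) := by
    rw [tprod_eq_prod_singleAlgHom, map_prod]
    exact SetLike.prod_mem_graded H κ _ fun i _ => hφ i (κ i) (a i) (ha i)
  exact hH.mono hk hprod

section

variable [∀ i, IsAlgebraFiltration (F i)]

instance : IsGradedFamily (piFamily F) where
  one_mem := ⟨0, by simp, 1, fun i => SetLike.one_mem_graded (F i), rfl⟩
  mul_mem := by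
    rintro _ _ _ _ ⟨κ, rfl, a, ha, rfl⟩ ⟨κ', rfl, a', ha', rfl⟩
    rw [PiTensorProduct.tprod_mul_tprod, ← Finset.sum_add_distrib]
    exact tprod_mem_piFamily fun i => SetLike.mul_mem_graded (ha i) (ha' i)

lemma singleAlgHom_mem_piFiltration [DecidableEq ι] {i : ι} {k : ℕ} {a : A i} (ha : a ∈ F i k) :
    PiTensorProduct.singleAlgHom (R := 𝕜) i a ∈ piFiltration F k := by
  refine mem_spanFiltration le_rfl ⟨Pi.single i k, by simp, Pi.mulSingle i a, fun j => ?_, rfl⟩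
  obtain rfl | hij := eq_or_ne j i
  · simpa using ha
  · simpa [hij] using SetLike.one_mem_graded (F j)

lemma singleAlgHom_mem_below [DecidableEq ι] {i : ι} {k : ℕ} {a : A i} (ha : a ∈ below (F i) k) :
    PiTensorProduct.singleAlgHom (R := 𝕜) i a ∈ below (piFiltration F) k :=
  map_mem_below (PiTensorProduct.singleAlgHom (R := 𝕜) i).toLinearMap
    (fun _ _ ha => singleAlgHom_mem_piFiltration ha) ha

lemma tprod_mem_below {κ : ι → ℕ} {a : ∀ i, A i} (ha : ∀ i, a i ∈ F i (κ i)) {j : ι}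
    (haj : a j ∈ below (F j) (κ j)) : (⨂ₜ[𝕜] i, a i) ∈ below (piFiltration F) (∑ i, κ i) := by
  classical
  rw [tprod_eq_prod_singleAlgHom]
  exact prod_mem_below _ (fun i _ => singleAlgHom_mem_piFiltration (ha i)) (Finset.mem_univ j)
    (singleAlgHom_mem_below haj)

lemma tprod_sub_tprod_mem_below {κ : ι → ℕ} {a a' : ∀ i, A i} (ha : ∀ i, a i ∈ F i (κ i))
    (haa' : ∀ i, a' i - a i ∈ below (F i) (κ i)) :
    (⨂ₜ[𝕜] i, a' i) - (⨂ₜ[𝕜] i, a i) ∈ below (piFiltration F) (∑ i, κ i) := by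
  classical
  rw [tprod_eq_prod_singleAlgHom, tprod_eq_prod_singleAlgHom]
  refine prod_sub_prod_mem_below _ (fun i _ => singleAlgHom_mem_piFiltration (ha i)) fun i _ => ?_
  rw [← map_sub]
  exact singleAlgHom_mem_below (haa' i)

end

variable {G : ι → Type*} [∀ i, CommRing (G i)] [∀ i, Algebra 𝕜 (G i)]
  {σ : ∀ i, ℕ → A i →ₗ[𝕜] G i} {s : ∀ i, ℕ → G i →ₗ[𝕜] A i}

lemma tprod_symbol_eq_zero (h : ∀ i, IsSymbol (F i) (σ i) (s i)) {κ κ' : ι → ℕ} {a : ∀ i, A i}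
    (ha : ∀ i, a i ∈ F i (κ i)) (hsum : ∑ i, κ i ≤ ∑ i, κ' i) (hne : κ' ≠ κ) :
    (⨂ₜ[𝕜] i, σ i (κ' i) (a i)) = 0 := by
  obtain ⟨i, hi⟩ := exists_lt_of_sum_le hsum hne
  exact MultilinearMap.map_coord_zero _ i ((h i).map_eq_zero (ha i) hi)

variable [DecidableEq ι]

/-- The degree `m` part `∑_{∑ κ i = m} ⨂ σ i (κ i)` of the tensor product of a finite family of
sequences of maps. -/
noncomputable def piSymbol (σ : ∀ i, ℕ → A i →ₗ[𝕜] G i) (m : ℕ) :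
    (⨂[𝕜] i, A i) →ₗ[𝕜] ⨂[𝕜] i, G i :=
  ∑ κ ∈ Finset.univ.piAntidiag m, PiTensorProduct.map fun i => σ i (κ i)

lemma piSymbol_apply_tprod (m : ℕ) (a : ∀ i, A i) :
    piSymbol σ m (⨂ₜ[𝕜] i, a i) =
      ∑ κ ∈ Finset.univ.piAntidiag m, ⨂ₜ[𝕜] i, σ i (κ i) (a i) := by
  simp [piSymbol]

lemma IsSymbol.piSymbol_tprod (h : ∀ i, IsSymbol (F i) (σ i) (s i)) {κ : ι → ℕ} {a : ∀ i, A i}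
    (ha : ∀ i, a i ∈ F i (κ i)) :
    piSymbol σ (∑ i, κ i) (⨂ₜ[𝕜] i, a i) = ⨂ₜ[𝕜] i, σ i (κ i) (a i) := by
  rw [piSymbol_apply_tprod, Finset.sum_eq_single κ]
  · intro κ' hκ' hne
    exact tprod_symbol_eq_zero h ha (Finset.mem_piAntidiag.1 hκ').1.ge hne
  · simp

lemma IsSymbol.pi [∀ i, IsAlgebraFiltration (F i)] (h : ∀ i, IsSymbol (F i) (σ i) (s i)) :
    IsSymbol (piFiltration F) (piSymbol σ) (piSymbol s) := by
  have hlift : ∀ {κ κ' : ι → ℕ} {a : ∀ i, A i}, (∀ i, a i ∈ F i (κ i)) → κ' ≠ κ →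
      (⨂ₜ[𝕜] i, s i (κ' i) (σ i (κ i) (a i))) ∈ below (piFiltration F) (∑ i, κ' i) := by
    intro κ κ' a ha hne
    obtain ⟨j, hj⟩ := Function.ne_iff.1 hne
    exact tprod_mem_below (fun i => (h i).lift_mem (κ' i) (ha i))
      ((h j).lift_mem_below (ha j) hj)
  refine isSymbol_spanFiltration ?_ ?_ ?_ ?_ ?_
  · simp [PiTensorProduct.one_def, piSymbol_apply_tprod, (h _).map_one]
    rfl
  · rintro _ _ _ ⟨κ, rfl, a, ha, rfl⟩ _ ⟨κ', rfl, a', ha', rfl⟩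
    rw [piSymbol_tprod h ha, piSymbol_tprod h ha', PiTensorProduct.tprod_mul_tprod,
      PiTensorProduct.tprod_mul_tprod, ← Finset.sum_add_distrib]
    exact (piSymbol_tprod h fun i => SetLike.mul_mem_graded (ha i) (ha' i)).trans
      (congrArg _ (funext fun i => (h i).map_mul (ha i) (ha' i)))
  · rintro _ m hm _ ⟨κ, rfl, a, ha, rfl⟩
    rw [piSymbol_apply_tprod]
    refine Finset.sum_eq_zero fun κ' hκ' => ?_
    obtain rfl := (Finset.mem_piAntidiag.1 hκ').1
    exact tprod_symbol_eq_zero h ha hm.le fun hκ => hm.ne (by rw [hκ])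
  · rintro _ _ ⟨κ, rfl, a, ha, rfl⟩
    rw [piSymbol_tprod h ha, piSymbol_apply_tprod,
      ← Finset.add_sum_erase _ _ (Finset.mem_piAntidiag.2 ⟨rfl, fun _ _ => Finset.mem_univ _⟩),
      add_sub_right_comm]
    refine add_mem (tprod_sub_tprod_mem_below ha fun i => (h i).lift_sub_mem (ha i))
      (sum_mem fun κ' hκ' => ?_)
    obtain ⟨hne, hκ'⟩ := Finset.mem_erase.1 hκ'
    exact (Finset.mem_piAntidiag.1 hκ').1 ▸ hlift ha hne
  · rintro _ m hm _ ⟨κ, rfl, a, ha, rfl⟩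
    rw [piSymbol_tprod h ha, piSymbol_apply_tprod]
    refine sum_mem fun κ' hκ' => ?_
    obtain rfl := (Finset.mem_piAntidiag.1 hκ').1
    exact hlift ha fun hκ => hm (by rw [hκ])

end PiTensorProduct

section Graded

variable {𝕜 A : Type*} [CommRing 𝕜] [CommRing A] [Algebra 𝕜 A]

/-- The filtration by degree of a graded algebra. -/
abbrev gradedFiltration (𝒜 : ℕ → Submodule 𝕜 A) : ℕ → Submodule 𝕜 A :=
  spanFiltration 𝕜 fun k => (𝒜 k : Set A)

variable (𝒜 : ℕ → Submodule 𝕜 A)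

instance [SetLike.GradedMonoid 𝒜] : IsGradedFamily fun k => (𝒜 k : Set A) where
  one_mem := SetLike.one_mem_graded 𝒜
  mul_mem ha hb := SetLike.mul_mem_graded ha hb

lemma gradedFiltration_zero : gradedFiltration 𝒜 0 = 𝒜 0 := by
  simp [spanFiltration]

variable [GradedAlgebra 𝒜]

open GradedAlgebra (proj)

lemma proj_of_mem {m : ℕ} {a : A} (ha : a ∈ 𝒜 m) : proj 𝒜 m a = a :=
  DirectSum.decompose_of_mem_same 𝒜 ha

lemma proj_of_mem_of_ne {k m : ℕ} (hkm : k ≠ m) {a : A} (ha : a ∈ 𝒜 k) : proj 𝒜 m a = 0 :=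
  DirectSum.decompose_of_mem_ne 𝒜 ha hkm

lemma proj_mem (m : ℕ) (a : A) : proj 𝒜 m a ∈ 𝒜 m :=
  (DirectSum.decompose 𝒜 a m).2

lemma exists_mem_gradedFiltration (a : A) : ∃ m, a ∈ gradedFiltration 𝒜 m :=
  exists_mem_spanFiltration (by
    rw [← Submodule.iSup_eq_span]
    exact (DirectSum.Decomposition.isInternal 𝒜).submodule_iSup_eq_top) a

lemma isSymbol_gradedFiltration : IsSymbol (gradedFiltration 𝒜) (proj 𝒜) (proj 𝒜) :=
  isSymbol_spanFiltration (proj_of_mem 𝒜 (SetLike.one_mem_graded 𝒜))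
    (fun i j a ha b hb => by
      rw [proj_of_mem 𝒜 ha, proj_of_mem 𝒜 hb, proj_of_mem 𝒜 (SetLike.mul_mem_graded ha hb)])
    (fun i j hij a ha => proj_of_mem_of_ne 𝒜 hij.ne ha)
    (fun i a ha => by simp [proj_of_mem 𝒜 ha])
    (fun i j hij a ha => by simp [proj_of_mem 𝒜 ha, proj_of_mem_of_ne 𝒜 hij.symm ha])

end Graded

lemma exists_linearMap_comp_eq_on {𝕜 V W U : Type*} [Field 𝕜] [AddCommGroup V] [Module 𝕜 V]
    [AddCommGroup W] [Module 𝕜 W] [AddCommGroup U] [Module 𝕜 U] (p : V →ₗ[𝕜] W) (q : V →ₗ[𝕜] U)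
    (S : Submodule 𝕜 V) (h : ∀ v ∈ S, p v = 0 → q v = 0) :
    ∃ σ : W →ₗ[𝕜] U, ∀ v ∈ S, σ (p v) = q v := by
  let pS : S →ₗ[𝕜] W := p ∘ₗ S.subtype
  have hker : LinearMap.ker pS.rangeRestrict ≤ LinearMap.ker (q ∘ₗ S.subtype) := fun v hv =>
    h v v.2 (congrArg Subtype.val hv)
  obtain ⟨r, hr⟩ := pS.rangeRestrict.exists_rightInverse_of_surjective pS.range_rangeRestrict
  obtain ⟨σ, hσ⟩ := LinearMap.exists_extend ((q ∘ₗ S.subtype) ∘ₗ r)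
  refine ⟨σ, fun v hv => ?_⟩
  have hv' := LinearMap.congr_fun hσ (pS.rangeRestrict ⟨v, hv⟩)
  have hsub : r (pS.rangeRestrict ⟨v, hv⟩) - ⟨v, hv⟩ ∈ LinearMap.ker (q ∘ₗ S.subtype) :=
    hker (by
      rw [LinearMap.mem_ker, map_sub, sub_eq_zero]
      exact LinearMap.congr_fun hr _)
  rw [LinearMap.mem_ker, map_sub, sub_eq_zero] at hsub
  exact hv'.trans hsub

lemma exists_lt_mem_of_mem_below {𝕜 A : Type*} [CommRing 𝕜] [CommRing A] [Algebra 𝕜 A]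
    {F : ℕ → Submodule 𝕜 A} (hF : Monotone F) {m : ℕ} {a : A} (ha : a ∈ below F m)
    (ha0 : a ≠ 0) : ∃ k < m, a ∈ F k := by
  cases m with
  | zero => exact absurd (by simpa [below] using ha) ha0
  | succ m => exact ⟨m, m.lt_succ_self, below_le (fun k hk => hF (Nat.le_of_lt_succ hk)) ha⟩

section Quotient

open GradedAlgebra (proj)

variable {𝕜 A : Type*} [CommRing 𝕜] [CommRing A] [Algebra 𝕜 A] (𝒜 : ℕ → Submodule 𝕜 A)
  [GradedAlgebra 𝒜]

lemma exists_proj_ne_zero {a : A} (ha : a ≠ 0) :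
    ∃ k, a ∈ gradedFiltration 𝒜 k ∧ proj 𝒜 k a ≠ 0 := by
  classical
  have hex := exists_mem_gradedFiltration 𝒜 a
  refine ⟨Nat.find hex, Nat.find_spec hex, fun h0 => ?_⟩
  have hbelow := (isSymbol_gradedFiltration 𝒜).mem_below (Nat.find_spec hex) h0
  obtain ⟨k, hk, hak⟩ := exists_lt_mem_of_mem_below (spanFiltration_mono _) hbelow ha
  exact Nat.find_min hex hk hak

variable {𝒜} {n : ℕ} {Ω u : A}

lemma proj_sub_mul (hΩ : Ω ∈ 𝒜 n) (hu : u ∈ below (gradedFiltration 𝒜) n) {k : ℕ} {h : A}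
    (hh : h ∈ gradedFiltration 𝒜 k) : proj 𝒜 (n + k) ((Ω - u) * h) = Ω * proj 𝒜 k h := by
  have hsymb := isSymbol_gradedFiltration 𝒜
  rw [sub_mul, map_sub, hsymb.map_mul (mem_spanFiltration le_rfl hΩ) hh, proj_of_mem 𝒜 hΩ,
    hsymb.eq_zero_of_mem_below (mul_mem_below_left hu hh), sub_zero]

lemma dvd_proj_of_dvd [IsDomain A] (hΩ : Ω ∈ 𝒜 n) (hΩ0 : Ω ≠ 0)
    (hu : u ∈ below (gradedFiltration 𝒜) n) {m : ℕ} {e : A} (he : e ∈ gradedFiltration 𝒜 m)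
    (hdvd : Ω - u ∣ e) : Ω ∣ proj 𝒜 m e := by
  obtain ⟨h, rfl⟩ := hdvd
  obtain rfl | hne := eq_or_ne h 0
  · simp
  obtain ⟨k, hk, hk0⟩ := exists_proj_ne_zero 𝒜 hne
  have hlead := proj_sub_mul hΩ hu hk
  have hsymb := isSymbol_gradedFiltration 𝒜
  rcases lt_trichotomy m (n + k) with hlt | rfl | hlt
  · exact absurd (hlead ▸ hsymb.map_eq_zero he hlt) (mul_ne_zero hΩ0 hk0)
  · exact hlead ▸ dvd_mul_right Ω _
  · have hΩu : Ω - u ∈ gradedFiltration 𝒜 n :=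
      sub_mem (mem_spanFiltration le_rfl hΩ) (mem_of_mem_below hu)
    rw [hsymb.map_eq_zero (SetLike.mul_mem_graded hΩu hk) hlt]
    exact dvd_zero Ω

variable {P : Type*} [CommRing P] [Algebra 𝕜 P] {π : A →ₐ[𝕜] P}

lemma map_proj_mul_mem_below (hΩ : Ω ∈ 𝒜 n) (hu : u ∈ below (gradedFiltration 𝒜) n)
    (hπ : π Ω = π u) (j : ℕ) (h : A) :
    π (proj 𝒜 j (Ω * h)) ∈ below (mapFiltration π (gradedFiltration 𝒜)) j := by
  rw [GradedAlgebra.proj_apply]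
  by_cases hnj : n ≤ j
  · rw [DirectSum.coe_decompose_mul_of_left_mem_of_le 𝒜 hΩ hnj, map_mul, hπ, ← map_mul]
    refine map_mem_below π.toLinearMap (fun _ _ => map_mem_mapFiltration π) ?_
    have hmem : (DirectSum.decompose 𝒜 h (j - n) : A) ∈ gradedFiltration 𝒜 (j - n) :=
      mem_spanFiltration le_rfl (SetLike.coe_mem _)
    simpa [hnj] using mul_mem_below_left hu hmem
  · rw [DirectSum.coe_decompose_mul_of_left_mem_of_not_le 𝒜 hΩ hnj, map_zero]
    exact zero_mem _

lemma exists_linearMap_map_eq_mk_proj {𝕜 A P : Type*} [Field 𝕜] [CommRing A] [IsDomain A]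
    [Algebra 𝕜 A] [CommRing P] [Algebra 𝕜 P] {𝒜 : ℕ → Submodule 𝕜 A} [GradedAlgebra 𝒜] {n : ℕ}
    {Ω u : A} (hΩ : Ω ∈ 𝒜 n) (hΩ0 : Ω ≠ 0) (hu : u ∈ below (gradedFiltration 𝒜) n)
    {π : A →ₐ[𝕜] P} (hπ : RingHom.ker π = Ideal.span {Ω - u}) (m : ℕ) :
    ∃ σ : P →ₗ[𝕜] A ⧸ Ideal.span {Ω}, ∀ e ∈ gradedFiltration 𝒜 m,
      σ (π.toLinearMap e) = Ideal.Quotient.mkₐ 𝕜 (Ideal.span {Ω}) (proj 𝒜 m e) :=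
  exists_linearMap_comp_eq_on π.toLinearMap
    ((Ideal.Quotient.mkₐ 𝕜 (Ideal.span {Ω})).toLinearMap ∘ₗ proj 𝒜 m) (gradedFiltration 𝒜 m)
    fun e he h0 => by
      have hdvd : Ω - u ∣ e := by rwa [← Ideal.mem_span_singleton, ← hπ]
      exact Ideal.Quotient.eq_zero_iff_mem.2
        (Ideal.mem_span_singleton.2 (dvd_proj_of_dvd hΩ hΩ0 hu he hdvd))

end Quotient

/-- The associated graded algebra of `A/(Ω - u)`, where `u` has degree less than the homogeneous
`Ω`, is `A/(Ω)`. -/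
lemma exists_isSymbol_of_ker_eq {𝕜 A P : Type*} [Field 𝕜] [CommRing A] [IsDomain A] [Algebra 𝕜 A]
    [CommRing P] [Algebra 𝕜 P] {𝒜 : ℕ → Submodule 𝕜 A} [GradedAlgebra 𝒜] {n : ℕ} {Ω u : A}
    (hΩ : Ω ∈ 𝒜 n) (hΩ0 : Ω ≠ 0) (hu : u ∈ below (gradedFiltration 𝒜) n) {π : A →ₐ[𝕜] P}
    (hπ : RingHom.ker π = Ideal.span {Ω - u}) :
    ∃ (σ : ℕ → P →ₗ[𝕜] A ⧸ Ideal.span {Ω}) (s : ℕ → (A ⧸ Ideal.span {Ω}) →ₗ[𝕜] P),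
      IsSymbol (mapFiltration π (gradedFiltration 𝒜)) σ s := by
  have hsymb := isSymbol_gradedFiltration 𝒜
  let mk : A →ₐ[𝕜] A ⧸ Ideal.span {Ω} := Ideal.Quotient.mkₐ 𝕜 _
  have hπΩ : π Ω = π u := by
    rw [← sub_eq_zero, ← map_sub, ← RingHom.mem_ker, hπ]
    exact Ideal.mem_span_singleton_self _
  choose σ hσ using exists_linearMap_map_eq_mk_proj hΩ hΩ0 hu hπ
  obtain ⟨κ, hκ⟩ := mk.toLinearMap.exists_rightInverse_of_surjective
    (LinearMap.range_eq_top.2 (Ideal.Quotient.mkₐ_surjective 𝕜 _))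
  have hlift : ∀ j e, π (GradedAlgebra.proj 𝒜 j (κ (mk e)) - GradedAlgebra.proj 𝒜 j e) ∈
      below (mapFiltration π (gradedFiltration 𝒜)) j := by
    intro j e
    obtain ⟨h, hh⟩ : Ω ∣ κ (mk e) - e := by
      rw [← Ideal.mem_span_singleton, ← Ideal.Quotient.eq]
      exact LinearMap.congr_fun hκ (mk e)
    rw [← map_sub, hh]
    exact map_proj_mul_mem_below hΩ hu hπΩ j h
  have hbelow : ∀ {j e}, e ∈ below (gradedFiltration 𝒜) j →
      π e ∈ below (mapFiltration π (gradedFiltration 𝒜)) j :=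
    map_mem_below π.toLinearMap fun _ _ => map_mem_mapFiltration π
  refine ⟨σ, fun m => π.toLinearMap ∘ₗ GradedAlgebra.proj 𝒜 m ∘ₗ κ, ?_, ?_, ?_, ?_, ?_⟩
  · rw [← map_one π]
    refine (hσ 0 1 (SetLike.one_mem_graded _)).trans ?_
    exact (congrArg mk hsymb.map_one).trans (map_one mk)
  · rintro i j _ _ ⟨e, he, rfl⟩ ⟨e', he', rfl⟩
    rw [hσ i e he, hσ j e' he']
    refine (congrArg (σ (i + j)) (map_mul π e e').symm).trans
      ((hσ (i + j) (e * e') (SetLike.mul_mem_graded he he')).trans ?_)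
    exact (congrArg mk (hsymb.map_mul he he')).trans (map_mul mk _ _)
  · rintro i j _ ⟨e, he, rfl⟩ hij
    rw [hσ j e ((spanFiltration_mono _) hij.le he)]
    exact (congrArg mk (hsymb.map_eq_zero he hij)).trans (map_zero mk)
  · rintro i _ ⟨e, he, rfl⟩
    rw [hσ i e he]
    simpa [mk] using add_mem (hlift i (GradedAlgebra.proj 𝒜 i e)) (hbelow (hsymb.lift_sub_mem he))
  · rintro i j _ ⟨e, he, rfl⟩ hij
    rw [hσ i e he]
    simpa [mk] using
      add_mem (hlift j (GradedAlgebra.proj 𝒜 i e)) (hbelow (hsymb.lift_mem_below he hij))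

section Bracket

namespace PoissonStructure

variable {𝕜 A : Type*} [CommRing 𝕜] [CommRing A] [Algebra 𝕜 A] (P : PoissonStructure 𝕜 A)

/-- The bracket as a bilinear map. -/
def bilin : A →ₗ[𝕜] A →ₗ[𝕜] A :=
  LinearMap.mk₂ 𝕜 P.bracket P.add_left P.smul_left
    (fun a b c => by rw [P.antisymm, P.add_left, neg_add, ← P.antisymm, ← P.antisymm])
    (fun r a b => by rw [P.antisymm, P.smul_left, ← smul_neg, ← P.antisymm])

/-- The Hamiltonian derivation `{a, -}`. -/
def ad (a : A) : Derivation 𝕜 A A :=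
  Derivation.mk' (P.bilin a) fun b c =>
    (P.leibniz a b c).trans (by rw [smul_eq_mul, smul_eq_mul, mul_comm c, add_comm]; rfl)

lemma bracket_eq_ad (a b : A) : P.bracket a b = P.ad a b := rfl

lemma bracket_one_right (a : A) : P.bracket a 1 = 0 := (P.ad a).map_one_eq_zero

lemma bracket_one_left (a : A) : P.bracket 1 a = 0 := by
  rw [P.antisymm, bracket_one_right, neg_zero]

end PoissonStructure

section

variable {𝕜 A : Type*} [CommRing 𝕜] [CommRing A] [Algebra 𝕜 A]

/-- The bracket raises degrees in the filtration `F` by at most `D`. -/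
def IsShift (P : PoissonStructure 𝕜 A) (F : ℕ → Submodule 𝕜 A) (D : ℕ) : Prop :=
  ∀ i j, ∀ a ∈ F i, ∀ b ∈ F j, P.bracket a b ∈ F (i + j + D)

variable {P : PoissonStructure 𝕜 A} {F : ℕ → Submodule 𝕜 A} {D : ℕ}

lemma IsShift.rescale (h : IsShift P F D) (hF : Monotone F) {c : ℕ} (hc : 0 < c) :
    IsShift P (rescale c F) (c * D) := fun i j a ha b hb => by
  rw [_root_.rescale, Nat.add_mul_div_left _ _ hc]
  exact hF (Nat.add_le_add_right Nat.div_add_div_le_add_div D) (h _ _ a ha b hb)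

lemma isShift_spanFiltration {T : ℕ → Set A}
    (h : ∀ i j, ∀ a ∈ T i, ∀ b ∈ T j, P.bracket a b ∈ spanFiltration 𝕜 T (i + j + D)) :
    IsShift P (spanFiltration 𝕜 T) D := fun _ _ _ ha _ hb =>
  bilin_mem_of_mem_spanFiltration P.bilin (fun _ hk _ hl _ ha _ hb =>
    spanFiltration_mono T (by lia) (h _ _ _ ha _ hb)) ha hb

section Generated

variable [hF : IsAlgebraFiltration F] {V : Submodule 𝕜 A}

lemma pow_le_filtration {c : ℕ} (hV : V ≤ F c) (k : ℕ) : V ^ k ≤ F (k * c) := by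
  induction k with
  | zero =>
    rw [pow_zero, zero_mul, Submodule.one_le]
    exact SetLike.one_mem_graded F
  | succ k ih =>
    rw [pow_succ, Nat.succ_mul, Submodule.mul_le]
    exact fun a ha b hb => SetLike.mul_mem_graded (ih ha) (hV hb)

lemma derivation_mem_of_mem_pow (hV : V ≤ F 1) (δ : Derivation 𝕜 A A)
    (hδ : ∀ a ∈ V, δ a ∈ F (1 + D)) {k : ℕ} {a : A} (ha : a ∈ V ^ k) : δ a ∈ F (k + D) := by
  induction ha using Submodule.pow_induction_on_left' with
  | algebraMap r => simp
  | add a b k _ _ ha hb => simpa using add_mem ha hb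
  | mem_mul v hv k a ha ih =>
    have ha' : a ∈ F k := by simpa using pow_le_filtration hV k ha
    rw [Derivation.leibniz, smul_eq_mul, smul_eq_mul, show k.succ + D = 1 + (k + D) by lia]
    refine add_mem (SetLike.mul_mem_graded (hV hv) ih) ?_
    rw [show 1 + (k + D) = k + (1 + D) by lia]
    exact SetLike.mul_mem_graded ha' (hδ v hv)

lemma isShift_of_le_gradedFiltration_pow (hFV : ∀ m, F m ≤ gradedFiltration (V ^ ·) m)
    (hV : V ≤ F 1) (hbr : ∀ a ∈ V, ∀ b ∈ V, P.bracket a b ∈ F (2 + D)) : IsShift P F D := by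
  have hleft : ∀ a ∈ V, ∀ k, ∀ b ∈ V ^ k, P.ad a b ∈ F (k + (1 + D)) := fun a ha k b hb =>
    derivation_mem_of_mem_pow hV (P.ad a)
      (fun b hb => by simpa [← add_assoc, ← P.bracket_eq_ad] using hbr a ha b hb) hb
  have hpow : ∀ i j, ∀ a ∈ V ^ i, ∀ b ∈ V ^ j, P.bracket a b ∈ F (i + j + D) := by
    intro i j a ha b hb
    have hab : P.ad b a ∈ F (i + (j + D)) := by
      refine derivation_mem_of_mem_pow hV (P.ad b) (fun c hc => ?_) ha
      rw [← P.bracket_eq_ad, P.antisymm, add_left_comm]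
      exact neg_mem (hleft c hc j b hb)
    rw [P.antisymm, P.bracket_eq_ad, add_assoc]
    exact neg_mem hab
  exact fun i j a ha b hb =>
    bilin_mem_of_mem_spanFiltration P.bilin (fun k hk l hl a ha b hb =>
      hF.mono (by lia) (hpow k l a ha b hb)) (hFV i ha) (hFV j hb)

end Generated

end

section

variable {𝕜 A B : Type*} [CommRing 𝕜] [CommRing A] [Algebra 𝕜 A] [CommRing B] [Algebra 𝕜 B]
  {F : ℕ → Submodule 𝕜 A} {H : ℕ → Submodule 𝕜 B} [IsAlgebraFiltration F] [IsAlgebraFiltration H]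

lemma IsShift.tensor {PA : PoissonStructure 𝕜 A} {PB : PoissonStructure 𝕜 B}
    {PT : PoissonStructure 𝕜 (A ⊗[𝕜] B)} {D : ℕ} (hA : IsShift PA F D) (hB : IsShift PB H D)
    (hPT : IsTensorBracket PA PB PT) : IsShift PT (tensorFiltration F H) D := by
  refine isShift_spanFiltration ?_
  rintro _ _ _ ⟨i, j, rfl, a, ha, b, hb, rfl⟩ _ ⟨i', j', rfl, a', ha', b', hb', rfl⟩
  rw [hPT]
  exact add_mem
    (mem_spanFiltration (by lia) (tmul_mem_tensorFamily (hA _ _ a ha a' ha')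
      (SetLike.mul_mem_graded hb hb')))
    (mem_spanFiltration (by lia) (tmul_mem_tensorFamily (SetLike.mul_mem_graded ha ha')
      (hB _ _ b hb b' hb')))

end

section

variable {𝕜 : Type*} [CommRing 𝕜] {d : ℕ} {A : Fin d → Type*} [∀ i, CommRing (A i)]
  [∀ i, Algebra 𝕜 (A i)] {P : ∀ i, PoissonStructure 𝕜 (A i)}
  {PT : PoissonStructure 𝕜 (⨂[𝕜] i, A i)}

lemma IsShift.pi {F : ∀ i, ℕ → Submodule 𝕜 (A i)} [∀ i, IsAlgebraFiltration (F i)] {D : ℕ}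
    (h : ∀ i, IsShift (P i) (F i) D) (hPT : IsPiTensorBracket P PT) :
    IsShift PT (piFiltration F) D := by
  refine isShift_spanFiltration ?_
  rintro _ _ _ ⟨κ, rfl, a, ha, rfl⟩ _ ⟨κ', rfl, a', ha', rfl⟩
  rw [hPT]
  refine sum_mem fun i _ => ?_
  have hupdate : ∀ j, Function.update (fun j => a j * a' j) i ((P i).bracket (a i) (a' i)) j ∈
      F j (κ j + κ' j + Pi.single (M := fun _ => ℕ) i D j) := by
    intro j
    obtain rfl | hij := eq_or_ne j i
    · simpa using h j _ _ _ (ha j) _ (ha' j)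
    · simpa [hij] using SetLike.mul_mem_graded (ha j) (ha' j)
  refine mem_spanFiltration (le_of_eq ?_) (tprod_mem_piFamily hupdate)
  simp [Finset.sum_add_distrib]

lemma IsPiTensorBracket.bracket_singleAlgHom (hPT : IsPiTensorBracket P PT) (i : Fin d)
    (a b : A i) :
    PT.bracket (PiTensorProduct.singleAlgHom (R := 𝕜) i a)
        (PiTensorProduct.singleAlgHom (R := 𝕜) i b) =
      PiTensorProduct.singleAlgHom (R := 𝕜) i ((P i).bracket a b) := by
  simp only [PiTensorProduct.singleAlgHom_apply]
  rw [hPT, Finset.sum_eq_single i]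
  · congr 1
    ext j
    obtain rfl | hij := eq_or_ne j i <;> simp [*]
  · intro j _ hij
    exact (PiTensorProduct.tprod 𝕜).map_coord_zero j
      (by simp [hij, PoissonStructure.bracket_one_left])
  · simp

end

end Bracket

section StandardGraded

variable {𝕜 A : Type*} [CommRing 𝕜] [CommRing A] [Algebra 𝕜 A]

lemma iSup_pow_eq_top_of_adjoin_eq_top {V : Submodule 𝕜 A}
    (hV : Algebra.adjoin 𝕜 (V : Set A) = ⊤) : ⨆ k, V ^ k = ⊤ := by
  have hmul : (⨆ k, V ^ k) * (⨆ k, V ^ k) ≤ ⨆ k, V ^ k := by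
    rw [Submodule.iSup_mul]
    refine iSup_le fun i => ?_
    rw [Submodule.mul_iSup]
    exact iSup_le fun j => (pow_add V i j).symm.trans_le (le_iSup (V ^ ·) (i + j))
  refine eq_top_iff.2 fun a _ => ?_
  have ha : a ∈ Algebra.adjoin 𝕜 (V : Set A) := hV ▸ Algebra.mem_top
  induction ha using Algebra.adjoin_induction with
  | mem a ha => exact Submodule.mem_iSup_of_mem 1 (by simpa using ha)
  | algebraMap r => exact Submodule.mem_iSup_of_mem 0 (by simp)
  | add a b _ _ ha hb => exact add_mem (ha trivial) (hb trivial)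
  | mul a b _ _ ha hb => exact hmul (Submodule.mul_mem_mul (ha trivial) (hb trivial))

lemma le_pow_of_adjoin_eq_top (𝒜 : ℕ → Submodule 𝕜 A) [GradedAlgebra 𝒜]
    (hgen : Algebra.adjoin 𝕜 (𝒜 1 : Set A) = ⊤) (k : ℕ) : 𝒜 k ≤ 𝒜 1 ^ k := by
  have hpow : ∀ j, 𝒜 1 ^ j ≤ 𝒜 j := fun j => by
    induction j with
    | zero => simpa using SetLike.one_mem_graded 𝒜
    | succ j ih =>
      rw [pow_succ, Submodule.mul_le]
      exact fun a ha b hb => SetLike.mul_mem_graded (ih ha) hb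
  have hproj : ⨆ j, 𝒜 1 ^ j ≤ (𝒜 1 ^ k).comap (GradedAlgebra.proj 𝒜 k) := by
    refine iSup_le fun j a ha => ?_
    obtain rfl | hjk := eq_or_ne j k
    · rwa [Submodule.mem_comap, proj_of_mem 𝒜 (hpow j ha)]
    · simp [proj_of_mem_of_ne 𝒜 hjk (hpow j ha)]
  intro a ha
  have hak : a ∈ ⨆ j, 𝒜 1 ^ j := iSup_pow_eq_top_of_adjoin_eq_top hgen ▸ Submodule.mem_top
  simpa [proj_of_mem 𝒜 ha] using hproj hak

lemma isShift_gradedFiltration {P : PoissonStructure 𝕜 A} (𝒜 : ℕ → Submodule 𝕜 A)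
    [GradedAlgebra 𝒜] (hgen : Algebra.adjoin 𝕜 (𝒜 1 : Set A) = ⊤) {D : ℕ}
    (hbr : ∀ a ∈ 𝒜 1, ∀ b ∈ 𝒜 1, P.bracket a b ∈ gradedFiltration 𝒜 (2 + D)) :
    IsShift P (gradedFiltration 𝒜) D :=
  isShift_of_le_gradedFiltration_pow
    (fun _ => spanFiltration_le fun k hk _ ha =>
      mem_spanFiltration hk (le_pow_of_adjoin_eq_top 𝒜 hgen k ha))
    (fun _ ha => mem_spanFiltration le_rfl ha) hbr

lemma gradedFiltration_finite [IsNoetherianRing 𝕜] {𝒜 : ℕ → Submodule 𝕜 A}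
    (hfin : ∀ k, (𝒜 k).FG) (m : ℕ) : Module.Finite 𝕜 (gradedFiltration 𝒜 m) := by
  have heq : gradedFiltration 𝒜 m = ⨆ k : Fin (m + 1), 𝒜 k := by
    refine le_antisymm (spanFiltration_le fun k hk _ ha => ?_) (iSup_le fun k _ ha => ?_)
    · exact Submodule.mem_iSup_of_mem (⟨k, by lia⟩ : Fin (m + 1)) ha
    · exact mem_spanFiltration (by lia) ha
  rw [heq, Module.Finite.iff_fg]
  exact Submodule.fg_iSup _ fun k => hfin k

end StandardGraded

section PointsSeparate

/-- The `𝕜`-points of the algebra `A`, i.e. its algebra homomorphisms to `𝕜`, separate the elements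
of `A`. -/
def PointsSeparate (𝕜 A : Type*) [CommRing 𝕜] [CommRing A] [Algebra 𝕜 A] : Prop :=
  ∀ a : A, a ≠ 0 → ∃ φ : A →ₐ[𝕜] 𝕜, φ a ≠ 0

lemma pointsSeparate_mvPolynomial_quotient {𝕜 σ : Type*} [Field 𝕜] [IsAlgClosed 𝕜] [Finite σ]
    {I : Ideal (MvPolynomial σ 𝕜)} (hI : I.IsRadical) :
    PointsSeparate 𝕜 (MvPolynomial σ 𝕜 ⧸ I) := by
  intro a ha
  obtain ⟨e, rfl⟩ := Ideal.Quotient.mk_surjective a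
  have he : e ∉ MvPolynomial.vanishingIdeal 𝕜 (MvPolynomial.zeroLocus 𝕜 I) := by
    rwa [MvPolynomial.vanishingIdeal_zeroLocus_eq_radical, hI.radical,
      ← Ideal.Quotient.eq_zero_iff_mem]
  simp only [MvPolynomial.mem_vanishingIdeal_iff, not_forall] at he
  obtain ⟨p, hp, hpe⟩ := he
  exact ⟨Ideal.Quotient.liftₐ I (MvPolynomial.aeval p) hp, hpe⟩

lemma PointsSeparate.isReduced_tensorProduct {𝕜 A R : Type*} [Field 𝕜] [CommRing A] [Algebra 𝕜 A]
    [CommRing R] [Algebra 𝕜 R] [IsReduced R] (hA : PointsSeparate 𝕜 A) :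
    IsReduced (A ⊗[𝕜] R) := by
  classical
  let b := Module.Basis.ofVectorSpace 𝕜 R
  let coeff := TensorProduct.equivFinsuppOfBasisRight (M := A) b
  let ev : (A →ₐ[𝕜] 𝕜) → A ⊗[𝕜] R →ₐ[𝕜] R := fun φ =>
    (Algebra.TensorProduct.lid 𝕜 R).toAlgHom.comp (Algebra.TensorProduct.map φ (AlgHom.id 𝕜 R))
  have hcoeff : ∀ (φ : A →ₐ[𝕜] 𝕜) z k, φ (coeff z k) = b.repr (ev φ z) k := by
    intro φ z k
    induction z using TensorProduct.induction_on with
    | zero => simp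
    | add x y hx hy => rw [map_add, map_add, map_add, Finsupp.add_apply, Finsupp.add_apply, map_add,
        hx, hy]
    | tmul a r => simp [coeff, ev, mul_comm]
  refine ⟨fun z hz => (LinearEquiv.map_eq_zero_iff coeff).1 (Finsupp.ext fun k => ?_)⟩
  by_contra hk
  obtain ⟨φ, hφ⟩ := hA _ hk
  exact hφ (by rw [hcoeff, (hz.map (ev φ)).eq_zero, map_zero, Finsupp.zero_apply])

section Pi

variable {ι 𝕜 : Type*}

/-- The linear map `⨂ aᵢ ↦ ∏ φᵢ aᵢ`. -/
noncomputable def prodMap [Fintype ι] [CommRing 𝕜] {M : ι → Type*} [∀ i, AddCommGroup (M i)]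
    [∀ i, Module 𝕜 (M i)] {C : Type*} [CommRing C] [Algebra 𝕜 C] (φ : ∀ i, M i →ₗ[𝕜] C) :
    (⨂[𝕜] i, M i) →ₗ[𝕜] C :=
  PiTensorProduct.lift ((MultilinearMap.mkPiAlgebra 𝕜 ι C).compLinearMap φ)

variable [Field 𝕜]

lemma exists_prodMap_ne_zero [Fintype ι] {M : ι → Type*} [∀ i, AddCommGroup (M i)]
    [∀ i, Module 𝕜 (M i)] {x : ⨂[𝕜] i, M i} (hx : x ≠ 0) :
    ∃ φ : ∀ i, M i →ₗ[𝕜] 𝕜, prodMap φ x ≠ 0 := by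
  let b := fun i => Module.Basis.ofVectorSpace 𝕜 (M i)
  have hcoord : ∀ p, (Basis.piTensorProduct b).coord p = prodMap fun i => (b i).coord (p i) := by
    intro p
    ext a
    simp [prodMap, Basis.piTensorProduct_repr_tprod_apply]
  contrapose! hx
  refine (Basis.piTensorProduct b).ext_elem fun p => ?_
  rw [← Module.Basis.coord_apply, hcoord, hx, map_zero, Finsupp.zero_apply]

variable {A : ι → Type*} [∀ i, CommRing (A i)] [∀ i, Algebra 𝕜 (A i)]

/-- Contracting all factors but the `i`-th gives an element of `A i` on which the functional `φ i`
can be traded for a point. -/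
lemma PointsSeparate.exists_prodMap_update_ne_zero [Fintype ι] [DecidableEq ι] {i : ι}
    (hA : PointsSeparate 𝕜 (A i)) {φ : ∀ i, A i →ₗ[𝕜] 𝕜} {x : ⨂[𝕜] i, A i}
    (hx : prodMap φ x ≠ 0) :
    ∃ ψ : A i →ₐ[𝕜] 𝕜, prodMap (Function.update φ i ψ.toLinearMap) x ≠ 0 := by
  let contract : (⨂[𝕜] i, A i) →ₗ[𝕜] A i :=
    prodMap (Function.update (fun j => Algebra.linearMap 𝕜 (A i) ∘ₗ φ j) i LinearMap.id)
  have hcontract : ∀ ψ : A i →ₗ[𝕜] 𝕜, prodMap (Function.update φ i ψ) = ψ ∘ₗ contract := by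
    intro ψ
    ext a
    have hne : ∀ j ∈ Finset.univ.erase i, j ≠ i := fun j => Finset.ne_of_mem_erase
    simp only [prodMap, contract, LinearMap.compMultilinearMap_apply, PiTensorProduct.lift.tprod,
      MultilinearMap.compLinearMap_apply, MultilinearMap.mkPiAlgebra_apply, LinearMap.comp_apply]
    rw [← Finset.mul_prod_erase _ _ (Finset.mem_univ i),
      ← Finset.mul_prod_erase _ _ (Finset.mem_univ i), Function.update_self, Function.update_self,
      Finset.prod_congr rfl fun j hj => by rw [Function.update_of_ne (hne j hj)],
      Finset.prod_congr (g := fun j => algebraMap 𝕜 (A i) (φ j (a j))) rfl fun j hj => by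
        rw [Function.update_of_ne (hne j hj)]; rfl, ← map_prod, LinearMap.id_apply, mul_comm (a i),
      ← Algebra.smul_def, map_smul, smul_eq_mul, mul_comm]
  obtain ⟨ψ, hψ⟩ := hA (contract x) fun h0 => hx <| by
    rw [← Function.update_eq_self i φ, hcontract, LinearMap.comp_apply, h0, map_zero]
  exact ⟨ψ, by rwa [hcontract]⟩

lemma PointsSeparate.pi [Finite ι] (hA : ∀ i, PointsSeparate 𝕜 (A i)) :
    PointsSeparate 𝕜 (⨂[𝕜] i, A i) := by
  classical
  have := Fintype.ofFinite ι
  intro x hx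
  have hpoints : ∀ t : Finset ι, ∃ φ : ∀ i, A i →ₗ[𝕜] 𝕜, prodMap φ x ≠ 0 ∧
      ∀ i ∈ t, ∃ ψ : A i →ₐ[𝕜] 𝕜, φ i = ψ.toLinearMap := by
    intro t
    induction t using Finset.induction_on with
    | empty => simpa using exists_prodMap_ne_zero hx
    | insert i t hi ih =>
      obtain ⟨φ, hφx, hφ⟩ := ih
      obtain ⟨ψ, hψ⟩ := (hA i).exists_prodMap_update_ne_zero hφx
      refine ⟨Function.update φ i ψ.toLinearMap, hψ, fun j hj => ?_⟩
      obtain rfl | hji := eq_or_ne j i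
      · exact ⟨ψ, Function.update_self ..⟩
      · rw [Function.update_of_ne hji]
        exact hφ j (Finset.mem_of_mem_insert_of_ne hj hji)
  obtain ⟨φ, hφx, hφ⟩ := hpoints Finset.univ
  choose ψ hψ using fun i => hφ i (Finset.mem_univ i)
  obtain rfl : φ = fun i => (ψ i).toLinearMap := funext hψ
  refine ⟨PiTensorProduct.liftAlgHom ((MultilinearMap.mkPiAlgebra 𝕜 ι 𝕜).compLinearMap
    fun i => (ψ i).toLinearMap) ?_ ?_, hφx⟩
  · simp
  · intro a a'
    simp [Finset.prod_mul_distrib]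

end Pi

end PointsSeparate

section IsolatedSingularity

section

variable {𝕜 A : Type*} [CommRing 𝕜] [CommRing A] [Algebra 𝕜 A] (𝒜 : ℕ → Submodule 𝕜 A)
  [GradedAlgebra 𝒜]

lemma exists_pow_mem_of_finite_quotient {I : Ideal A} (hI : I.IsHomogeneous 𝒜)
    [Module.Finite 𝕜 (A ⧸ I)] {m : ℕ} (hm : 0 < m) {a : A} (ha : a ∈ 𝒜 m) : ∃ N, a ^ N ∈ I := by
  obtain ⟨p, hp, hp0⟩ : IsIntegral 𝕜 (Ideal.Quotient.mk I a) := IsIntegral.of_finite 𝕜 _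
  have hpa : Polynomial.aeval a p ∈ I := by
    rw [← Ideal.Quotient.eq_zero_iff_mem, ← hp0, ← Polynomial.aeval_def]
    exact (Polynomial.aeval_algHom_apply (Ideal.Quotient.mkₐ 𝕜 I) a p).symm
  have hlead : GradedAlgebra.proj 𝒜 (p.natDegree * m) (Polynomial.aeval a p) = a ^ p.natDegree := by
    have hpow : ∀ j, a ^ j ∈ 𝒜 (j * m) := fun j => SetLike.pow_mem_graded j ha
    rw [Polynomial.aeval_eq_sum_range, map_sum, Finset.sum_eq_single p.natDegree]
    · rw [map_smul, proj_of_mem 𝒜 (hpow _), hp.coeff_natDegree, one_smul]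
    · intro j _ hj
      have hjm : j * m ≠ p.natDegree * m := fun h => hj (Nat.eq_of_mul_eq_mul_right hm h)
      rw [map_smul, proj_of_mem_of_ne 𝒜 hjm (hpow j), smul_zero]
    · simp
  exact ⟨p.natDegree, hlead ▸ hI _ hpa⟩

lemma exists_homogeneous_coeff {ι : Type*} [Fintype ι] {g : ι → A} {m N : ℕ}
    (hg : ∀ i, g i ∈ 𝒜 m) {a : A} (ha : a ∈ 𝒜 (N + m)) (hspan : a ∈ Ideal.span (Set.range g)) :
    ∃ c : ι → A, (∀ i, c i ∈ 𝒜 N) ∧ ∑ i, c i * g i = a := by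
  obtain ⟨c, rfl⟩ := Ideal.mem_span_range_iff_exists_fun.1 hspan
  refine ⟨fun i => GradedAlgebra.proj 𝒜 N (c i), fun i => proj_mem 𝒜 N (c i), ?_⟩
  rw [← proj_of_mem 𝒜 ha, map_sum]
  exact Finset.sum_congr rfl fun i _ =>
    (DirectSum.coe_decompose_mul_add_of_right_mem 𝒜 (hg i)).symm

end

open MvPolynomial

attribute [local instance] MvPolynomial.gradedAlgebra

/-- The ideal generated by the partial derivatives of `Ω`. -/
noncomputable def jacobianIdeal {σ 𝕜 : Type*} [CommRing 𝕜] (Ω : MvPolynomial σ 𝕜) :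
    Ideal (MvPolynomial σ 𝕜) :=
  Ideal.span (Set.range fun i => pderiv i Ω)

section

variable {σ 𝕜 : Type*} [CommRing 𝕜] {Ω : MvPolynomial σ 𝕜} {n : ℕ}

lemma exists_X_pow_mem_jacobianIdeal (hΩ : Ω.IsHomogeneous n)
    (hfin : Module.Finite 𝕜 (MvPolynomial σ 𝕜 ⧸ jacobianIdeal Ω)) (i : σ) :
    ∃ N, (X i : MvPolynomial σ 𝕜) ^ N ∈ jacobianIdeal Ω := by
  refine exists_pow_mem_of_finite_quotient (homogeneousSubmodule σ 𝕜) ?_ one_pos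
    (isHomogeneous_X 𝕜 i)
  refine Ideal.homogeneous_span _ _ ?_
  rintro _ ⟨j, rfl⟩
  exact ⟨n - 1, hΩ.pderiv⟩

lemma exists_sum_mul_pderiv_eq_X_pow [Fintype σ] (hΩ : Ω.IsHomogeneous n)
    (hfin : Module.Finite 𝕜 (MvPolynomial σ 𝕜 ⧸ jacobianIdeal Ω)) (i : σ) :
    ∃ N, ∃ c : σ → MvPolynomial σ 𝕜, (∀ j, c j ∈ homogeneousSubmodule σ 𝕜 N) ∧
      ∑ j, c j * pderiv j Ω = X i ^ (N + (n - 1)) := by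
  obtain ⟨N, hN⟩ := exists_X_pow_mem_jacobianIdeal hΩ hfin i
  exact ⟨N, exists_homogeneous_coeff (homogeneousSubmodule σ 𝕜) (fun j => hΩ.pderiv)
    (isHomogeneous_X_pow i _) (by rw [pow_add]; exact Ideal.mul_mem_right _ _ hN)⟩

lemma ne_zero_of_finite_jacobianIdeal [Nontrivial 𝕜] [Nonempty σ] (hΩ : Ω.IsHomogeneous n)
    (hfin : Module.Finite 𝕜 (MvPolynomial σ 𝕜 ⧸ jacobianIdeal Ω)) : Ω ≠ 0 := by
  rintro rfl
  obtain ⟨N, hN⟩ := exists_X_pow_mem_jacobianIdeal hΩ hfin (Classical.arbitrary σ)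
  have hbot : jacobianIdeal (0 : MvPolynomial σ 𝕜) = ⊥ := by simp [jacobianIdeal]
  rw [hbot, Ideal.mem_bot] at hN
  exact (isRegular_X_pow N).ne_zero hN

lemma isUnit_of_dvd_X_pow [IsDomain 𝕜] {g : MvPolynomial σ 𝕜} {i j : σ} (hij : i ≠ j)
    {N M : ℕ} (hi : g ∣ X i ^ N) (hj : g ∣ X j ^ M) : IsUnit g := by
  obtain ⟨k, -, hk⟩ := (dvd_prime_pow X_prime N).1 hi
  obtain rfl | hk0 := Nat.eq_zero_or_pos k
  · rwa [pow_zero, associated_one_iff_isUnit] at hk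
  · have hdvd : (X i : MvPolynomial σ 𝕜) ∣ X j ^ M :=
      (dvd_pow_self _ hk0.ne').trans (hk.symm.dvd.trans hj)
    exact absurd (X_dvd_X.1 (X_prime.dvd_of_dvd_pow hdvd)) (by simpa using hij)

lemma squarefree_of_finite_jacobianIdeal [IsDomain 𝕜] [Nontrivial σ] (hΩ : Ω.IsHomogeneous n)
    (hfin : Module.Finite 𝕜 (MvPolynomial σ 𝕜 ⧸ jacobianIdeal Ω)) : Squarefree Ω := by
  rintro g ⟨u, rfl⟩
  have hle : jacobianIdeal (g * g * u) ≤ Ideal.span {g} := by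
    refine Ideal.span_le.2 ?_
    rintro _ ⟨i, rfl⟩
    rw [SetLike.mem_coe, Ideal.mem_span_singleton]
    simp only [Derivation.leibniz, smul_eq_mul]
    exact ⟨g * pderiv i u + u * (pderiv i g + pderiv i g), by ring⟩
  have hpow : ∀ i, ∃ N, g ∣ X i ^ N := fun i => by
    obtain ⟨N, hN⟩ := exists_X_pow_mem_jacobianIdeal hΩ hfin i
    exact ⟨N, Ideal.mem_span_singleton.1 (hle hN)⟩
  obtain ⟨i, j, hij⟩ := exists_pair_ne σ
  obtain ⟨N, hN⟩ := hpow i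
  obtain ⟨M, hM⟩ := hpow j
  exact isUnit_of_dvd_X_pow hij hN hM

end

lemma HasIsolatedSingularity.finite_jacobianIdeal {𝕜 : Type*} [Field 𝕜]
    {Ω : MvPolynomial (Fin 3) 𝕜} (hiso : HasIsolatedSingularity Ω) :
    Module.Finite 𝕜 (MvPolynomial (Fin 3) 𝕜 ⧸ jacobianIdeal Ω) := by
  have hrange : (Set.range fun i => pderiv i Ω) = {pderiv 0 Ω, pderiv 1 Ω, pderiv 2 Ω} := by
    ext e
    simp [Fin.exists_fin_succ, eq_comm]
  rwa [jacobianIdeal, hrange]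

lemma HasIsolatedSingularity.isRadical_span_singleton {𝕜 : Type*} [Field 𝕜]
    {Ω : MvPolynomial (Fin 3) 𝕜} {n : ℕ} (hiso : HasIsolatedSingularity Ω)
    (hΩ : Ω.IsHomogeneous n) : (Ideal.span {Ω}).IsRadical :=
  isRadical_iff_span_singleton.1
    (squarefree_of_finite_jacobianIdeal hΩ hiso.finite_jacobianIdeal).isRadical

end IsolatedSingularity

section JacobianBracket

open MvPolynomial

attribute [local instance] MvPolynomial.gradedAlgebra

variable {𝕜 : Type*} [CommRing 𝕜] {Ω : MvPolynomial (Fin 3) 𝕜} {n : ℕ}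

lemma jacBracket_isHomogeneous (hΩ : Ω.IsHomogeneous n) {k l : ℕ}
    {e e' : MvPolynomial (Fin 3) 𝕜} (he : e.IsHomogeneous k) (he' : e'.IsHomogeneous l) :
    (jacBracket Ω e e').IsHomogeneous (k - 1 + (l - 1) + (n - 1)) := by
  have hterm : ∀ p q r : Fin 3, (pderiv p e * pderiv q e' * pderiv r Ω).IsHomogeneous
      (k - 1 + (l - 1) + (n - 1)) := fun p q r =>
    ((he.pderiv (i := p)).mul (he'.pderiv (i := q))).mul (hΩ.pderiv (i := r))
  rw [jacBracket, Matrix.det_fin_three]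
  exact (((((hterm 0 1 2).sub (hterm 0 2 1)).sub (hterm 1 0 2)).add (hterm 1 2 0)).add
    (hterm 2 0 1)).sub (hterm 2 1 0)

lemma jacBracket_X_succ (Ω : MvPolynomial (Fin 3) 𝕜) (l : Fin 3) :
    jacBracket Ω (X (l + 1)) (X (l + 2)) = pderiv l Ω := by
  rw [jacBracket, Matrix.det_fin_three]
  fin_cases l <;> simp [pderiv_X]

lemma map_homogeneousSubmodule_one_pow {σ B : Type*} [CommRing B] [Algebra 𝕜 B]
    (g : MvPolynomial σ 𝕜 →ₐ[𝕜] B) (k : ℕ) :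
    (homogeneousSubmodule σ 𝕜 1).map g.toLinearMap ^ k =
      (homogeneousSubmodule σ 𝕜 k).map g.toLinearMap := by
  rw [← Submodule.map_pow, homogeneousSubmodule_one_pow]

lemma map_mem_of_mem_homogeneousSubmodule {σ B : Type*} [CommRing B] [Algebra 𝕜 B]
    {F : ℕ → Submodule 𝕜 B} [IsAlgebraFiltration F] {g : MvPolynomial σ 𝕜 →ₐ[𝕜] B} {m : ℕ}
    (hg : ∀ i, g (X i) ∈ F m) {k : ℕ} {e : MvPolynomial σ 𝕜}
    (he : e ∈ homogeneousSubmodule σ 𝕜 k) : g e ∈ F (k * m) := by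
  have hV : (homogeneousSubmodule σ 𝕜 1).map g.toLinearMap ≤ F m := by
    rw [homogeneousSubmodule_one_eq_span_X, Submodule.map_span_le]
    rintro _ ⟨i, rfl⟩
    exact hg i
  refine pow_le_filtration hV k ?_
  rw [map_homogeneousSubmodule_one_pow]
  exact Submodule.mem_map_of_mem he

namespace PQuot

variable (Ω) (ξ : 𝕜)

/-- `PQuot.mk` as an algebra homomorphism. -/
noncomputable def mkₐ : MvPolynomial (Fin 3) 𝕜 →ₐ[𝕜] PQuot 𝕜 Ω ξ :=
  Ideal.Quotient.mkₐ 𝕜 (Ideal.span {Ω - C ξ})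

lemma mkₐ_surjective : Function.Surjective (mkₐ Ω ξ) :=
  Ideal.Quotient.mkₐ_surjective 𝕜 _

lemma ker_mkₐ : RingHom.ker (mkₐ Ω ξ) = Ideal.span {Ω - C ξ} :=
  Ideal.Quotient.mkₐ_ker 𝕜 _

/-- The filtration of `P_{Ω-ξ}` by degree, the image of that of `𝕜[x,y,z]`. -/
noncomputable abbrev filtration : ℕ → Submodule 𝕜 (PQuot 𝕜 Ω ξ) :=
  mapFiltration (mkₐ Ω ξ) (gradedFiltration (homogeneousSubmodule (Fin 3) 𝕜))

lemma exists_mem_filtration (p : PQuot 𝕜 Ω ξ) : ∃ m, p ∈ filtration Ω ξ m := by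
  obtain ⟨e, rfl⟩ := mkₐ_surjective Ω ξ p
  obtain ⟨m, hm⟩ := exists_mem_gradedFiltration (homogeneousSubmodule (Fin 3) 𝕜) e
  exact ⟨m, map_mem_mapFiltration _ hm⟩

lemma filtration_finite [IsNoetherianRing 𝕜] (m : ℕ) : Module.Finite 𝕜 (filtration Ω ξ m) :=
  have := gradedFiltration_finite (homogeneousSubmodule_fg (Fin 3) 𝕜) m
  Module.Finite.map _ _

variable {Ω ξ}

lemma isShift_filtration {P : PoissonStructure 𝕜 (PQuot 𝕜 Ω ξ)} (hP : IsInducedBracket Ω ξ P)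
    (hΩ : Ω.IsHomogeneous n) (hn : 3 ≤ n) : IsShift P (filtration Ω ξ) (n - 3) := by
  have hmem : ∀ {m k e}, k ≤ m → e ∈ homogeneousSubmodule (Fin 3) 𝕜 k →
      mkₐ Ω ξ e ∈ filtration Ω ξ m := fun hk he =>
    map_mem_mapFiltration _ (mem_spanFiltration hk he)
  refine isShift_of_le_gradedFiltration_pow
    (V := (homogeneousSubmodule (Fin 3) 𝕜 1).map (mkₐ Ω ξ).toLinearMap) ?_ ?_ ?_
  · refine fun m => Submodule.map_le_iff_le_comap.2 (spanFiltration_le fun k hk e he => ?_)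
    have hpow := map_homogeneousSubmodule_one_pow (mkₐ Ω ξ) k
    exact mem_spanFiltration hk (hpow.ge (Submodule.mem_map_of_mem he))
  · rintro _ ⟨e, he, rfl⟩
    exact hmem le_rfl he
  · rintro _ ⟨e, he, rfl⟩ _ ⟨e', he', rfl⟩
    exact (hP e e').symm ▸ hmem (by lia) (jacBracket_isHomogeneous hΩ he he')

lemma exists_isSymbol_filtration {𝕜 : Type*} [Field 𝕜] {Ω : MvPolynomial (Fin 3) 𝕜} {n : ℕ}
    (hΩ : Ω.IsHomogeneous n) (hΩ0 : Ω ≠ 0) (hn : 0 < n) (ξ : 𝕜) :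
    ∃ (σ : ℕ → PQuot 𝕜 Ω ξ →ₗ[𝕜] MvPolynomial (Fin 3) 𝕜 ⧸ Ideal.span {Ω})
      (s : ℕ → (MvPolynomial (Fin 3) 𝕜 ⧸ Ideal.span {Ω}) →ₗ[𝕜] PQuot 𝕜 Ω ξ),
      IsSymbol (filtration Ω ξ) σ s :=
  exists_isSymbol_of_ker_eq hΩ hΩ0
    (le_below _ hn (mem_spanFiltration le_rfl (MvPolynomial.isHomogeneous_C _ ξ))) (ker_mkₐ Ω ξ)

end PQuot

end JacobianBracket

section Descent

open MvPolynomial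

attribute [local instance] MvPolynomial.gradedAlgebra

variable {𝕜 B G : Type*} [CommRing 𝕜] [CommRing B] [Algebra 𝕜 B] [CommRing G] [Algebra 𝕜 G]
  [IsReduced G] {PB : PoissonStructure 𝕜 B} {F : ℕ → Submodule 𝕜 B} [hF : IsAlgebraFiltration F]
  {σ : ℕ → B →ₗ[𝕜] G} {s : ℕ → G →ₗ[𝕜] B} {Ω : MvPolynomial (Fin 3) 𝕜} {n D : ℕ}
  {g : MvPolynomial (Fin 3) 𝕜 →ₐ[𝕜] B}

lemma map_X_mem_below (h : IsSymbol F σ s) (hPB : IsShift PB F D) (hΩ : Ω.IsHomogeneous n)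
    (hfin : Module.Finite 𝕜 (MvPolynomial (Fin 3) 𝕜 ⧸ jacobianIdeal Ω))
    (hg : ∀ e e', g (jacBracket Ω e e') = PB.bracket (g e) (g e')) {m : ℕ}
    (hD : D < m * (n - 3)) (hm : ∀ l, g (X l) ∈ F m) (l : Fin 3) : g (X l) ∈ below F m := by
  obtain ⟨N, c, hc, hsum⟩ := exists_sum_mul_pderiv_eq_X_pow hΩ hfin l
  have hpderiv : ∀ j, g (pderiv j Ω) ∈ F (m + m + D) := fun j => by
    rw [← jacBracket_X_succ, hg]
    exact hPB _ _ _ (hm _) _ (hm _)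
  have hpow : g (X l) ^ (N + (n - 1)) ∈ F (N * m + (m + m + D)) := by
    rw [← map_pow, ← hsum, map_sum]
    refine sum_mem fun j _ => ?_
    rw [map_mul]
    exact SetLike.mul_mem_graded (map_mem_of_mem_homogeneousSubmodule hm (hc j)) (hpderiv j)
  have hlt : N * m + (m + m + D) < (N + (n - 1)) * m := by
    have hn : 0 < n - 3 := Nat.pos_of_mul_pos_left (D.zero_le.trans_lt hD)
    calc N * m + (m + m + D) < N * m + (m + m + m * (n - 3)) := by lia
      _ = (N + (n - 3 + 2)) * m := by ring
      _ = (N + (n - 1)) * m := by rw [show n - 3 + 2 = n - 1 by lia]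
  exact h.mem_below_of_pow_mem_below (hm l) (le_below F hlt hpow)

/-- As long as `m > c`, the generators drop from `F m` to `F (m - 1)`. -/
lemma map_X_mem_of_le (h : IsSymbol F σ s) (hPB : IsShift PB F D) (hΩ : Ω.IsHomogeneous n)
    (hfin : Module.Finite 𝕜 (MvPolynomial (Fin 3) 𝕜 ⧸ jacobianIdeal Ω))
    (hg : ∀ e e', g (jacBracket Ω e e') = PB.bracket (g e) (g e')) (hn : 4 ≤ n) {c : ℕ}
    (hD : D ≤ c * (n - 3)) (hexh : ∀ x, ∃ m, x ∈ F m) (l : Fin 3) : g (X l) ∈ F c := by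
  have hdesc : ∀ t, (∀ l, g (X l) ∈ F (c + t)) → ∀ l, g (X l) ∈ F c := by
    intro t
    induction t with
    | zero => exact fun hm => hm
    | succ t ih =>
      intro hm
      have hlt : D < (c + (t + 1)) * (n - 3) :=
        hD.trans_lt (Nat.mul_lt_mul_of_pos_right (by lia) (by lia))
      exact ih fun l => below_le (fun k hk => hF.mono (by lia))
        (map_X_mem_below h hPB hΩ hfin hg hlt hm l)
  choose m hm using fun l => hexh (g (X l))
  exact hdesc (∑ l, m l) (fun l => mem_of_le
    ((Finset.single_le_sum (fun _ _ => Nat.zero_le _) (Finset.mem_univ l)).trans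
      (Nat.le_add_left _ _)) (hm l)) l

end Descent

lemma range_eq_range_of_map_le_map {ι 𝕜 V W : Type*} [Field 𝕜] [AddCommGroup V] [Module 𝕜 V]
    [AddCommGroup W] [Module 𝕜 W] {f g : V →ₗ[𝕜] W} (hf : Function.Injective f)
    (hg : Function.Injective g) {F : ι → Submodule 𝕜 V} (hexh : ∀ v, ∃ m, v ∈ F m)
    (hfin : ∀ m, Module.Finite 𝕜 (F m)) (hle : ∀ m, (F m).map f ≤ (F m).map g) :
    Set.range f = Set.range g := by
  have heq : ∀ m, (F m).map f = (F m).map g := fun m => by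
    have := hfin m
    refine Submodule.eq_of_le_of_finrank_eq (hle m) ?_
    rw [← (Submodule.equivMapOfInjective f hf _).finrank_eq,
      ← (Submodule.equivMapOfInjective g hg _).finrank_eq]
  have hsub : ∀ {φ ψ : V →ₗ[𝕜] W}, (∀ m, (F m).map φ = (F m).map ψ) →
      Set.range φ ⊆ Set.range ψ := by
    rintro φ ψ h _ ⟨v, rfl⟩
    obtain ⟨m, hm⟩ := hexh v
    obtain ⟨u, -, hu⟩ := (h m).le (Submodule.mem_map_of_mem hm)
    exact ⟨u, hu⟩
  exact (hsub heq).antisymm (hsub fun m => (heq m).symm)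

/-- The rescaling factors `a i` and `b` turn brackets of degrees `k i` and `c` into brackets of the
common degree `b * c`. -/
lemma exists_weights {ι : Type*} [Finite ι] {k : ι → ℕ} {c : ℕ} (hc : 0 < c)
    (hk : ∀ i, c < k i) :
    ∃ (a : ι → ℕ) (b : ℕ), (∀ i, 0 < a i) ∧ (∀ i, a i < b) ∧ ∀ i, a i * k i = b * c := by
  classical
  have := Fintype.ofFinite ι
  have hq : ∀ i, 0 < ∏ j ∈ Finset.univ.erase i, k j := fun i =>
    Finset.prod_pos fun j _ => hc.trans (hk j)
  have hmul : ∀ i, k i * ∏ j ∈ Finset.univ.erase i, k j = ∏ j, k j := fun i =>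
    Finset.mul_prod_erase _ k (Finset.mem_univ i)
  refine ⟨fun i => c * ∏ j ∈ Finset.univ.erase i, k j, ∏ j, k j,
    fun i => Nat.mul_pos hc (hq i), fun i => ?_, fun i => ?_⟩
  · rw [← hmul i]
    exact Nat.mul_lt_mul_of_pos_right (hk i) (hq i)
  · rw [← hmul i]
    ring

section Main

open MvPolynomial

variable {𝕜 : Type*} [Field 𝕜] {d : ℕ} {Ω : Fin d → MvPolynomial (Fin 3) 𝕜} {n : Fin d → ℕ}
  {ξ : Fin d → 𝕜}

/-- The filtration of `P_{Ω₁-ξ₁} ⊗ ⋯ ⊗ P_{Ω_d-ξ_d}` in which the coordinates of the `i`-th factor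
have degree `a i`. -/
noncomputable abbrev weightedFiltration (Ω : Fin d → MvPolynomial (Fin 3) 𝕜) (ξ : Fin d → 𝕜)
    (a : Fin d → ℕ) : ℕ → Submodule 𝕜 (⨂[𝕜] i, PQuot 𝕜 (Ω i) (ξ i)) :=
  piFiltration fun i => rescale (a i) (PQuot.filtration (Ω i) (ξ i))

variable {a : Fin d → ℕ}

lemma exists_mem_weightedFiltration (ha : ∀ i, 0 < a i) (x : ⨂[𝕜] i, PQuot 𝕜 (Ω i) (ξ i)) :
    ∃ m, x ∈ weightedFiltration Ω ξ a m :=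
  exists_mem_piFiltration
    (fun i p => exists_mem_rescale (ha i) (PQuot.exists_mem_filtration (Ω i) (ξ i) p)) x

lemma weightedFiltration_finite (m : ℕ) : Module.Finite 𝕜 (weightedFiltration Ω ξ a m) :=
  piFiltration_finite (fun i => monotone_filtration (rescale (a i) (PQuot.filtration (Ω i) (ξ i))))
    (fun i _ => PQuot.filtration_finite (Ω i) (ξ i) _) m

/-- The `i`-th coordinate algebra `𝕜[x,y,z]` of the tensor product. -/
noncomputable def coordHom (Ω : Fin d → MvPolynomial (Fin 3) 𝕜) (ξ : Fin d → 𝕜) (i : Fin d) :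
    MvPolynomial (Fin 3) 𝕜 →ₐ[𝕜] ⨂[𝕜] i, PQuot 𝕜 (Ω i) (ξ i) :=
  (PiTensorProduct.singleAlgHom (A := fun i => PQuot 𝕜 (Ω i) (ξ i)) i).comp
    (PQuot.mkₐ (Ω i) (ξ i))

lemma map_mem_of_mem_weightedFiltration {C : Type*} [CommRing C] [Algebra 𝕜 C]
    {H : ℕ → Submodule 𝕜 C} [hH : IsAlgebraFiltration H]
    {f : (⨂[𝕜] i, PQuot 𝕜 (Ω i) (ξ i)) →ₐ[𝕜] C}
    (hf : ∀ i l, f (coordHom Ω ξ i (X l)) ∈ H (a i)) {m : ℕ}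
    {x : ⨂[𝕜] i, PQuot 𝕜 (Ω i) (ξ i)} (hx : x ∈ weightedFiltration Ω ξ a m) : f x ∈ H m := by
  refine map_mem_of_mem_piFiltration f ?_ hx
  rintro i m _ ⟨e, he, rfl⟩
  refine spanFiltration_le (N := (H m).comap (f.comp (coordHom Ω ξ i)).toLinearMap)
    (fun k hk e he => ?_) he
  have hkm : k * a i ≤ m := (Nat.mul_le_mul_right _ hk).trans (Nat.div_mul_le_self m (a i))
  exact hH.mono hkm (map_mem_of_mem_homogeneousSubmodule (g := f.comp (coordHom Ω ξ i)) (hf i) he)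

lemma coordHom_jacBracket {P : ∀ i, PoissonStructure 𝕜 (PQuot 𝕜 (Ω i) (ξ i))}
    (hP : ∀ i, IsInducedBracket (Ω i) (ξ i) (P i))
    {PT : PoissonStructure 𝕜 (⨂[𝕜] i, PQuot 𝕜 (Ω i) (ξ i))} (hPT : IsPiTensorBracket P PT)
    (i : Fin d) (e e' : MvPolynomial (Fin 3) 𝕜) :
    coordHom Ω ξ i (jacBracket (Ω i) e e') =
      PT.bracket (coordHom Ω ξ i e) (coordHom Ω ξ i e') :=
  ((hPT.bracket_singleAlgHom i _ _).trans (congrArg _ (hP i e e'))).symm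

lemma isShift_weightedFiltration (hhom : ∀ i, (Ω i).IsHomogeneous (n i)) (hn : ∀ i, 3 ≤ n i)
    (ha : ∀ i, 0 < a i) {D : ℕ} (haD : ∀ i, a i * (n i - 3) = D)
    {P : ∀ i, PoissonStructure 𝕜 (PQuot 𝕜 (Ω i) (ξ i))}
    (hP : ∀ i, IsInducedBracket (Ω i) (ξ i) (P i))
    {PT : PoissonStructure 𝕜 (⨂[𝕜] i, PQuot 𝕜 (Ω i) (ξ i))} (hPT : IsPiTensorBracket P PT) :
    IsShift PT (weightedFiltration Ω ξ a) D :=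
  IsShift.pi (fun i => haD i ▸ (PQuot.isShift_filtration (hP i) (hhom i) (hn i)).rescale
    (monotone_filtration _) (ha i)) hPT

variable {R : Type*} [CommRing R] [Algebra 𝕜 R] {ℛ : ℕ → Submodule 𝕜 R} [GradedAlgebra ℛ]
  [IsAlgClosed 𝕜] [IsReduced R]
  (hhom : ∀ i, (Ω i).IsHomogeneous (n i)) (hiso : ∀ i, HasIsolatedSingularity (Ω i))
  {P : ∀ i, PoissonStructure 𝕜 (PQuot 𝕜 (Ω i) (ξ i))}
  (hP : ∀ i, IsInducedBracket (Ω i) (ξ i) (P i))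
  {PT : PoissonStructure 𝕜 (⨂[𝕜] i, PQuot 𝕜 (Ω i) (ξ i))} (hPT : IsPiTensorBracket P PT)
  {PR : PoissonStructure 𝕜 R}
  {PT2 : PoissonStructure 𝕜 ((⨂[𝕜] i, PQuot 𝕜 (Ω i) (ξ i)) ⊗[𝕜] R)}
  (hPT2 : IsTensorBracket PT PR PT2)
  {f : (⨂[𝕜] i, PQuot 𝕜 (Ω i) (ξ i)) →ₐ[𝕜] (⨂[𝕜] i, PQuot 𝕜 (Ω i) (ξ i)) ⊗[𝕜] R}
  (hf : IsPoissonHom PT PT2 f)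

include hhom hiso hP hPT hPT2 hf

lemma map_coordHom_X_mem_tensorFiltration (hn : ∀ i, 4 ≤ n i) {c : ℕ}
    (hPR : IsShift PR (gradedFiltration ℛ) c) (ha : ∀ i, 0 < a i) {b : ℕ} (hb : 0 < b)
    (hac : ∀ i, a i * (n i - 3) = b * c) (i : Fin d) (l : Fin 3) :
    f (coordHom Ω ξ i (X l)) ∈
      tensorFiltration (weightedFiltration Ω ξ a) (rescale b (gradedFiltration ℛ)) (a i) := by
  have hfin : ∀ i, Module.Finite 𝕜 (MvPolynomial (Fin 3) 𝕜 ⧸ jacobianIdeal (Ω i)) :=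
    fun i => (hiso i).finite_jacobianIdeal
  have hreduced := PointsSeparate.isReduced_tensorProduct (R := R) <| PointsSeparate.pi fun i =>
    pointsSeparate_mvPolynomial_quotient ((hiso i).isRadical_span_singleton (hhom i))
  choose σ s hs using fun i => PQuot.exists_isSymbol_filtration (hhom i)
    (ne_zero_of_finite_jacobianIdeal (hhom i) (hfin i)) (by linarith [hn i]) (ξ i)
  have hsymb := (IsSymbol.pi fun i => (hs i).rescale (ha i)).tensor
    ((isSymbol_gradedFiltration ℛ).rescale hb)
  have hshift : IsShift PT2
      (tensorFiltration (weightedFiltration Ω ξ a) (rescale b (gradedFiltration ℛ))) (b * c) :=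
    (isShift_weightedFiltration hhom (fun i => by linarith [hn i]) ha hac hP hPT).tensor
      (hPR.rescale (monotone_filtration _) hb) hPT2
  exact map_X_mem_of_le (g := f.comp (coordHom Ω ξ i)) hsymb hshift (hhom i) (hfin i)
    (fun e e' => (congrArg f (coordHom_jacBracket hP hPT i e e')).trans (hf _ _)) (hn i)
    (hac i).ge (exists_mem_tensorFiltration (exists_mem_weightedFiltration ha)
      fun r => exists_mem_rescale hb (exists_mem_gradedFiltration ℛ r)) l

/-- In degree `a i < b` the tensor filtration only sees the constants of `R`. -/
lemma map_coordHom_X_mem_mapFiltration_includeLeft (hℛ : ℛ 0 = 1) (hn : ∀ i, 4 ≤ n i) {c : ℕ}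
    (hPR : IsShift PR (gradedFiltration ℛ) c) (ha : ∀ i, 0 < a i) {b : ℕ} (hab : ∀ i, a i < b)
    (hac : ∀ i, a i * (n i - 3) = b * c) (i : Fin d) (l : Fin 3) :
    f (coordHom Ω ξ i (X l)) ∈ mapFiltration
      (Algebra.TensorProduct.includeLeft : _ →ₐ[𝕜] (⨂[𝕜] i, PQuot 𝕜 (Ω i) (ξ i)) ⊗[𝕜] R)
      (weightedFiltration Ω ξ a) (a i) := by
  refine tensorFiltration_le_mapFiltration_includeLeft (monotone_filtration _) (fun j hj => ?_)
    (map_coordHom_X_mem_tensorFiltration hhom hiso hP hPT hPT2 hf hn hPR ha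
      ((ha i).trans (hab i)) hac i l)
  rw [rescale, Nat.div_eq_of_lt (hj.trans_lt (hab i)), gradedFiltration_zero, hℛ]

lemma range_eq_range_tmul_one [Nontrivial R] (hℛ : ℛ 0 = 1)
    (hgen : Algebra.adjoin 𝕜 (ℛ 1 : Set R) = ⊤) {c : ℕ} (hc : 0 < c) (hcn : ∀ i, c < n i - 3)
    (hbr : ∀ x ∈ ℛ 1, ∀ y ∈ ℛ 1, PR.bracket x y ∈ gradedFiltration ℛ (2 + c))
    (hinj : Function.Injective f) :
    Set.range f = Set.range fun p : ⨂[𝕜] i, PQuot 𝕜 (Ω i) (ξ i) => p ⊗ₜ[𝕜] (1 : R) := by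
  obtain ⟨a, b, ha, hab, hac⟩ := exists_weights hc hcn
  have hmem := map_coordHom_X_mem_mapFiltration_includeLeft hhom hiso hP hPT hPT2 hf hℛ
    (fun i => by have := hcn i; lia) (isShift_gradedFiltration ℛ hgen hbr) ha hab hac
  let includeLeft : (⨂[𝕜] i, PQuot 𝕜 (Ω i) (ξ i)) →ₐ[𝕜] (⨂[𝕜] i, PQuot 𝕜 (Ω i) (ξ i)) ⊗[𝕜] R :=
    Algebra.TensorProduct.includeLeft
  refine range_eq_range_of_map_le_map (f := f.toLinearMap) (g := includeLeft.toLinearMap) hinj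
    (Algebra.TensorProduct.includeLeft_injective (S := 𝕜) (FaithfulSMul.algebraMap_injective 𝕜 R))
    (exists_mem_weightedFiltration ha) weightedFiltration_finite fun m => ?_
  rintro _ ⟨x, hx, rfl⟩
  exact map_mem_of_mem_weightedFiltration hmem hx

end Main

theorem tensorProduct_of_potentials_relDixmier_graded_general
    {𝕜 : Type*} [Field 𝕜] [IsAlgClosed 𝕜]
    (d : ℕ) (Ω : Fin d → MvPolynomial (Fin 3) 𝕜) (n : Fin d → ℕ)
    (hhom : ∀ i, (Ω i).IsHomogeneous (n i))
    (hiso : ∀ i, HasIsolatedSingularity (Ω i))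
    (hdeg : ∀ i, 5 ≤ n i)
    (ξ : Fin d → 𝕜)
    (P : ∀ i, PoissonStructure 𝕜 (PQuot 𝕜 (Ω i) (ξ i)))
    (hP : ∀ i, IsInducedBracket (Ω i) (ξ i) (P i))
    (PT : PoissonStructure 𝕜 (⨂[𝕜] i, PQuot 𝕜 (Ω i) (ξ i)))
    (hPT : IsPiTensorBracket P PT)
    (w : ℤ) (hw : ∀ i, w ≤ (n i : ℤ) - 4)
    {R : Type*} [CommRing R] [IsReduced R] [Nontrivial R] [Algebra 𝕜 R]
    (PR : PoissonStructure 𝕜 R)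
    (ℛ : ℕ → Submodule 𝕜 R)
    (hdecomp : DirectSum.IsInternal ℛ)
    (hR0 : ℛ 0 = Submodule.span 𝕜 {(1 : R)})
    (hRmul : ∀ i j : ℕ, ∀ x ∈ ℛ i, ∀ y ∈ ℛ j, x * y ∈ ℛ (i + j))
    (hRgen : Algebra.adjoin 𝕜 (ℛ 1 : Set R) = ⊤)
    (hRbr : ∀ x ∈ ℛ 1, ∀ y ∈ ℛ 1,
      PR.bracket x y ∈ (if 0 ≤ w + 2 then ℛ (w + 2).toNat else ⊥))
    (PT2 : PoissonStructure 𝕜 ((⨂[𝕜] i, PQuot 𝕜 (Ω i) (ξ i)) ⊗[𝕜] R))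
    (hPT2 : IsTensorBracket PT PR PT2)
    (f : (⨂[𝕜] i, PQuot 𝕜 (Ω i) (ξ i)) →ₐ[𝕜] (⨂[𝕜] i, PQuot 𝕜 (Ω i) (ξ i)) ⊗[𝕜] R)
    (hf : IsPoissonHom PT PT2 f) (hinj : Function.Injective f) :
    Set.range f =
      Set.range fun p : ⨂[𝕜] i, PQuot 𝕜 (Ω i) (ξ i) => p ⊗ₜ[𝕜] (1 : R) := by
  have : SetLike.GradedMonoid ℛ :=
    { one_mem := hR0 ▸ Submodule.mem_span_singleton_self 1
      mul_mem := fun {i j x y} hx hy => hRmul i j x hx y hy }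
  let : GradedAlgebra ℛ := { this, hdecomp.chooseDecomposition with }
  have hbr : ∀ x ∈ ℛ 1, ∀ y ∈ ℛ 1,
      PR.bracket x y ∈ gradedFiltration ℛ (2 + max w.toNat 1) := by
    intro x hx y hy
    have hxy := hRbr x hx y hy
    split_ifs at hxy
    · exact mem_spanFiltration (by lia) hxy
    · exact (Submodule.mem_bot 𝕜).1 hxy ▸ zero_mem _
  have hwn : ∀ i, max w.toNat 1 < n i - 3 := fun i => by
    have := hw i
    have := hdeg i
    lia
  exact range_eq_range_tmul_one hhom hiso hP hPT hPT2 hf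
    (hR0.trans Submodule.one_eq_span.symm) hRgen (by lia) hwn hbr hinj

open PiTensorProduct in
/-- Theorem 0.6 (for `P`): `P = P_{Ω₁-ξ₁} ⊗ ⋯ ⊗ P_{Ω_d-ξ_d}` is `𝒢_w`-Dixmier for
`w ≤ min deg Ωᵢ - 4`: every injective Poisson morphism `P → P ⊗ R` into a connected
graded Poisson domain `R` generated in degree 1 with `{R₁,R₁} ⊆ R_{w+2}` has image `P ⊗ 𝕜·1`. -/
theorem tensorProduct_of_potentials_relDixmier_graded
    {𝕜 : Type*} [Field 𝕜] [IsAlgClosed 𝕜] [CharZero 𝕜]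
    (d : ℕ) (Ω : Fin d → MvPolynomial (Fin 3) 𝕜) (n : Fin d → ℕ)
    (hhom : ∀ i, (Ω i).IsHomogeneous (n i))
    (hiso : ∀ i, HasIsolatedSingularity (Ω i))
    (hdeg : ∀ i, 5 ≤ n i)
    (hdist : Function.Injective n)
    (ξ : Fin d → 𝕜)
    (P : ∀ i, PoissonStructure 𝕜 (PQuot 𝕜 (Ω i) (ξ i)))
    (hP : ∀ i, IsInducedBracket (Ω i) (ξ i) (P i))
    (PT : PoissonStructure 𝕜 (⨂[𝕜] i, PQuot 𝕜 (Ω i) (ξ i)))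
    (hPT : IsPiTensorBracket P PT)
    (w : ℤ) (hw : ∀ i, w ≤ (n i : ℤ) - 4)
    {R : Type*} [CommRing R] [IsDomain R] [Algebra 𝕜 R]
    (PR : PoissonStructure 𝕜 R)
    (ℛ : ℕ → Submodule 𝕜 R)
    (hdecomp : DirectSum.IsInternal ℛ)
    (hR0 : ℛ 0 = Submodule.span 𝕜 {(1 : R)})
    (hRfd : ∀ i, FiniteDimensional 𝕜 (ℛ i))
    (hRmul : ∀ i j : ℕ, ∀ x ∈ ℛ i, ∀ y ∈ ℛ j, x * y ∈ ℛ (i + j))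
    (hRgen : Algebra.adjoin 𝕜 (ℛ 1 : Set R) = ⊤)
    (hRbr : ∀ x ∈ ℛ 1, ∀ y ∈ ℛ 1,
      PR.bracket x y ∈ (if 0 ≤ w + 2 then ℛ (w + 2).toNat else ⊥))
    (PT2 : PoissonStructure 𝕜 ((⨂[𝕜] i, PQuot 𝕜 (Ω i) (ξ i)) ⊗[𝕜] R))
    (hPT2 : IsTensorBracket PT PR PT2)
    (f : (⨂[𝕜] i, PQuot 𝕜 (Ω i) (ξ i)) →ₐ[𝕜] (⨂[𝕜] i, PQuot 𝕜 (Ω i) (ξ i)) ⊗[𝕜] R)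
    (hf : IsPoissonHom PT PT2 f) (hinj : Function.Injective f) :
    Set.range f =
      Set.range fun p : ⨂[𝕜] i, PQuot 𝕜 (Ω i) (ξ i) => p ⊗ₜ[𝕜] (1 : R) :=
  tensorProduct_of_potentials_relDixmier_graded_general d Ω n hhom hiso hdeg ξ P hP PT hPT w hw PR ℛ
    hdecomp hR0 hRmul hRgen hRbr PT2 hPT2 f hf hinj
end

section
/- Let 𝕜 be a field of characteristic zero and let A = L_Λ(𝕜) be a Poisson torus of rank n which is Poisson simple. The following are equivalent: (1) every Poisson 𝕜-algebra endomorphism of A is bijective; (2) every Poisson subalgebra 𝒬 ⊆ A which is isomorphic to A as a Poisson 𝕜-algebra satisfies 𝒬 = A; (3) whenever z_1,…,z_n are units of A which, together with their inverses, generate A as a 𝕜-algebra and satisfy {z_i,z_j} = λ'_ij z_i z_j for some skew-symmetric matrix Λ' = (λ'_ij) ∈ M_n(𝕜), and whenever G = (g_ij) ∈ GL_n(ℤ) is an invertible integer matrix and p_1,…,p_n are positive integers such that λ'_ij = Σ_{k,t=1}^n p_k p_t g_ki g_tj λ'_kt for all 1 ≤ i,j ≤ n, then p_1 = ⋯ =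 p_n = 1. -/
open scoped TensorProduct

/-- Condition (1) of Lemma 2.8: every Poisson endomorphism of the torus is bijective. -/
def TorusEndosBijective {𝕜 : Type*} [Field 𝕜] (n : ℕ)
    (P : PoissonStructure 𝕜 (AddMonoidAlgebra 𝕜 (Fin n → ℤ))) : Prop :=
  ∀ f : AddMonoidAlgebra 𝕜 (Fin n → ℤ) →ₐ[𝕜] AddMonoidAlgebra 𝕜 (Fin n → ℤ),
    IsPoissonHom P P f → Function.Bijective f

/-- Condition (2) of Lemma 2.8: every Poisson subalgebra of the torus which is isomorphic
to the torus as a Poisson algebra is the whole torus. -/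
def TorusPoissonSubalgebrasRigid {𝕜 : Type*} [Field 𝕜] (n : ℕ)
    (P : PoissonStructure 𝕜 (AddMonoidAlgebra 𝕜 (Fin n → ℤ))) : Prop :=
  ∀ Q : Subalgebra 𝕜 (AddMonoidAlgebra 𝕜 (Fin n → ℤ)),
    (∀ x ∈ Q, ∀ y ∈ Q, P.bracket x y ∈ Q) →
    (∃ e : AddMonoidAlgebra 𝕜 (Fin n → ℤ) ≃ₐ[𝕜] Q,
      ∀ a b : AddMonoidAlgebra 𝕜 (Fin n → ℤ),
        (e (P.bracket a b) : AddMonoidAlgebra 𝕜 (Fin n → ℤ)) =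
          P.bracket (e a : AddMonoidAlgebra 𝕜 (Fin n → ℤ))
            (e b : AddMonoidAlgebra 𝕜 (Fin n → ℤ))) →
    Q = ⊤

/-- Condition (3) of Lemma 2.8, on re-presentations of the torus by units `z₁,…,zₙ` with
skew-symmetric log-Poisson matrix `Λ'`. -/
def TorusMatrixCondition {𝕜 : Type*} [Field 𝕜] (n : ℕ)
    (P : PoissonStructure 𝕜 (AddMonoidAlgebra 𝕜 (Fin n → ℤ))) : Prop :=
  ∀ (z : Fin n → (AddMonoidAlgebra 𝕜 (Fin n → ℤ))ˣ)
    (Λ' : Matrix (Fin n) (Fin n) 𝕜), Λ'.transpose = -Λ' →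
    Algebra.adjoin 𝕜
      ((Set.range fun i => ((z i : AddMonoidAlgebra 𝕜 (Fin n → ℤ)))) ∪
        (Set.range fun i => (((z i)⁻¹ : (AddMonoidAlgebra 𝕜 (Fin n → ℤ))ˣ) :
          AddMonoidAlgebra 𝕜 (Fin n → ℤ)))) = ⊤ →
    (∀ i j, P.bracket (z i : AddMonoidAlgebra 𝕜 (Fin n → ℤ))
        (z j : AddMonoidAlgebra 𝕜 (Fin n → ℤ)) =
      Λ' i j • ((z i : AddMonoidAlgebra 𝕜 (Fin n → ℤ)) *
        (z j : AddMonoidAlgebra 𝕜 (Fin n → ℤ)))) →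
    ∀ G : Matrix (Fin n) (Fin n) ℤ, IsUnit G.det →
    ∀ p : Fin n → ℕ, (∀ i, 0 < p i) →
    (∀ i j, Λ' i j =
      ∑ s : Fin n, ∑ t : Fin n,
        ((p s : 𝕜) * (p t : 𝕜) * ((G s i : ℤ) : 𝕜) * ((G t j : ℤ) : 𝕜)) * Λ' s t) →
    ∀ i, p i = 1

/-!
The units of `𝕜[ℤⁿ]` are the scalar multiples of monomials, so an algebra endomorphism `f` acts on
exponents through an endomorphism `M` of `ℤⁿ`. It is a Poisson map iff `M` preserves the form `B`
given by `Λ`, and it is injective or surjective iff `M` is. Hence (1) says that every isometry of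
`B` is bijective, and (2) that every injective one is. In a suitable basis an injective `M` is
`diag(p) * G` with `G` invertible (Smith normal form), and it is bijective iff all `p i = 1`: this
is (3). Finally, (2) makes `B` nondegenerate: a radical vector `u` and a functional `φ` with
`φ u > 0` give the injective, non-surjective isometry `v ↦ v + φ v • u`. Every isometry of a
nondegenerate form is injective, so (2) implies (1).
-/

open AddMonoidAlgebra Function

namespace PoissonStructure

variable {𝕜 A : Type*} [CommRing 𝕜] [CommRing A] [Algebra 𝕜 A]

lemma add_right (P : PoissonStructure 𝕜 A) (a b c : A) :
    P.bracket a (b + c) = P.bracket a b + P.bracket a c := by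
  rw [P.antisymm, P.add_left, neg_add, ← P.antisymm, ← P.antisymm]

lemma smul_right (P : PoissonStructure 𝕜 A) (r : 𝕜) (a b : A) :
    P.bracket a (r • b) = r • P.bracket a b := by
  rw [P.antisymm, P.smul_left, ← smul_neg, ← P.antisymm]

/-- The Poisson bracket as a bundled bilinear map, so that two brackets can be compared on
generators by extensionality. -/
def bracketₗ (P : PoissonStructure 𝕜 A) : A →ₗ[𝕜] A →ₗ[𝕜] A :=
  LinearMap.mk₂ 𝕜 P.bracket P.add_left P.smul_left P.add_right P.smul_right

end PoissonStructure

namespace PoissonTorus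

section PoissonHom

variable {R A B G : Type*} [CommRing R] [CommRing A] [Algebra R A] [CommRing B] [Algebra R B]
  [AddCommMonoid G]

lemma isDixmier_iff_forall_subalgebra_eq_top (P : PoissonStructure R A) :
    IsDixmier R A P ↔
      ∀ Q : Subalgebra R A, (∀ x ∈ Q, ∀ y ∈ Q, P.bracket x y ∈ Q) →
        (∃ e : A ≃ₐ[R] Q, ∀ a b, (e (P.bracket a b) : A) = P.bracket (e a) (e b)) → Q = ⊤ := by
  constructor
  · rintro h Q - ⟨e, he⟩
    have hbij : Bijective (Q.val.comp (e : A →ₐ[R] Q)) :=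
      h _ he (Subtype.val_injective.comp e.injective)
    rw [eq_top_iff]
    intro x _
    obtain ⟨a, rfl⟩ := hbij.2 x
    exact (e a).2
  · intro h f hf hinj
    refine ⟨hinj, (AlgHom.range_eq_top f).1 (h f.range ?_ ⟨AlgEquiv.ofInjective f hinj, hf⟩)⟩
    rintro _ ⟨a, rfl⟩ _ ⟨b, rfl⟩
    exact ⟨P.bracket a b, hf a b⟩

lemma isPoissonHom_iff_single {P : PoissonStructure R R[G]} {Q : PoissonStructure R B}
    {f : R[G] →ₐ[R] B} :
    IsPoissonHom P Q f ↔ ∀ u v, f (P.bracket (single u 1) (single v 1)) =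
      Q.bracket (f (single u 1)) (f (single v 1)) := by
  refine ⟨fun h u v ↦ h _ _, fun h a b ↦ ?_⟩
  have hext : P.bracketₗ.compr₂ f.toLinearMap =
      Q.bracketₗ.compl₁₂ f.toLinearMap f.toLinearMap := by
    ext u v
    exact h u v
  exact LinearMap.congr_fun₂ hext a b

end PoissonHom

section Units

variable {R G : Type*} [CommRing R] [IsDomain R] [AddCommGroup G]

lemma add_eq_zero_of_uniqueAdd_support {z w : R[G]} (h : z * w = 1) {a b : G}
    (ha : a ∈ z.coeff.support) (hb : b ∈ w.coeff.support)
    (hab : UniqueAdd z.coeff.support w.coeff.support a b) : a + b = 0 := by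
  have hcoeff : (1 : R[G]).coeff (a + b) ≠ 0 := by
    rw [← h, coeff_mul_add_of_uniqueAdd hab]
    exact mul_ne_zero (Finsupp.mem_support_iff.1 ha) (Finsupp.mem_support_iff.1 hb)
  contrapose! hcoeff
  rw [one_def, coeff_single, Finsupp.single_eq_of_ne hcoeff]

lemma card_support_mul_card_support_eq_one [TwoUniqueSums G] {z w : R[G]} (h : z * w = 1) :
    z.coeff.support.card * w.coeff.support.card = 1 := by
  have hne : z ≠ 0 ∧ w ≠ 0 := mul_ne_zero_iff.1 (h ▸ one_ne_zero)
  refine le_antisymm ?_ (Nat.mul_pos ?_ ?_)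
  · by_contra! hcard
    obtain ⟨⟨a, b⟩, hab, ⟨a', b'⟩, hab', hne, huniq, huniq'⟩ :=
      TwoUniqueSums.uniqueAdd_of_one_lt_card hcard
    rw [Finset.mem_product] at hab hab'
    have hsum : a + b = 0 := add_eq_zero_of_uniqueAdd_support h hab.1 hab.2 huniq
    have hsum' : a' + b' = 0 := add_eq_zero_of_uniqueAdd_support h hab'.1 hab'.2 huniq'
    obtain ⟨rfl, rfl⟩ := huniq hab'.1 hab'.2 (hsum'.trans hsum.symm)
    exact hne rfl
  · simpa [Finset.card_pos] using hne.1
  · simpa [Finset.card_pos] using hne.2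

lemma exists_eq_single_of_isUnit [TwoUniqueSums G] {z : R[G]} (hz : IsUnit z) :
    ∃ (u : G) (c : Rˣ), z = single u (c : R) := by
  obtain ⟨w, hzw⟩ := hz.exists_right_inv
  obtain ⟨hz_card, hw_card⟩ := mul_eq_one.1 (card_support_mul_card_support_eq_one hzw)
  obtain ⟨u, c, -, hzc⟩ := Finsupp.card_support_eq_one'.1 hz_card
  obtain ⟨v, d, -, hwd⟩ := Finsupp.card_support_eq_one'.1 hw_card
  obtain rfl : z = single u c := coeff_injective hzc
  obtain rfl : w = single v d := coeff_injective hwd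
  have hcd : c * d = 1 := by
    rw [single_mul_single, one_def, single_inj] at hzw
    exact hzw.resolve_right (fun h ↦ one_ne_zero h.2) |>.2
  exact ⟨u, Units.mkOfMulEqOne c d hcd, rfl⟩

end Units

section MonomialMap

variable {R G H : Type*} [CommRing R]

/-- `f` maps every monomial `x^u` to a unit multiple of the monomial `x^(M u)`; this is how an
endomorphism of a group algebra is encoded by its action on exponents. -/
def IsMonomialMap (f : R[G] → R[H]) (M : G → H) : Prop :=
  ∀ u, ∃ c : Rˣ, f (single u 1) = single (M u) (c : R)

lemma isMonomialMap_mapDomainAlgHom [AddCommMonoid G] [AddCommMonoid H] (M : G →+ H) :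
    IsMonomialMap (mapDomainAlgHom R R M) M :=
  fun _ ↦ ⟨1, mapDomain_single⟩

namespace IsMonomialMap

variable {F : Type*} [FunLike F R[G] R[H]] [LinearMapClass F R R[G] R[H]] {f : F} {M : G → H}

lemma exists_map_single (hf : IsMonomialMap f M) :
    ∃ c : G → Rˣ, ∀ u r, f (single u r) = single (M u) (r * c u) := by
  choose c hc using hf
  refine ⟨c, fun u r ↦ ?_⟩
  rw [← mul_one r, ← smul_eq_mul, ← smul_single, map_smul, hc, smul_single, smul_eq_mul,
    smul_eq_mul, mul_one]

lemma coeff_map_eq_zero (hf : IsMonomialMap f M) (a : R[G]) {w : H} (hw : w ∉ Set.range M) :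
    (f a).coeff w = 0 := by
  obtain ⟨c, hc⟩ := hf.exists_map_single
  induction a using AddMonoidAlgebra.induction_linear with
  | zero => simp
  | add a b ha hb => simp [ha, hb]
  | single u r =>
    rw [hc, coeff_single, Finsupp.single_eq_of_ne]
    rintro rfl
    exact hw ⟨u, rfl⟩

lemma injective (hf : IsMonomialMap f M) (hM : Injective M) : Injective f := by
  classical
  obtain ⟨c, hc⟩ := hf.exists_map_single
  have coeff_map (a : R[G]) (u : G) : (f a).coeff (M u) = a.coeff u * c u := by
    induction a using AddMonoidAlgebra.induction_linear with
    | zero => simp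
    | add a b ha hb => simp [ha, hb, add_mul]
    | single v r =>
      rw [hc, coeff_single, coeff_single, Finsupp.single_apply, Finsupp.single_apply, hM.eq_iff]
      split_ifs with h
      · rw [h]
      · rw [zero_mul]
  intro a b hab
  ext u
  rw [← (c u).mul_left_inj, ← coeff_map, ← coeff_map, hab]

lemma surjective (hf : IsMonomialMap f M) (hM : Surjective M) : Surjective f := by
  obtain ⟨c, hc⟩ := hf.exists_map_single
  intro b
  induction b using AddMonoidAlgebra.induction_linear with
  | zero => exact ⟨0, map_zero f⟩
  | add _ _ ha hb =>
    obtain ⟨a, rfl⟩ := ha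
    obtain ⟨b, rfl⟩ := hb
    exact ⟨a + b, map_add f a b⟩
  | single w r =>
    obtain ⟨u, rfl⟩ := hM w
    exact ⟨single u (r * ↑(c u)⁻¹), by rw [hc, Units.inv_mul_cancel_right]⟩

lemma injective_iff [Nontrivial R] (hf : IsMonomialMap f M) : Injective f ↔ Injective M := by
  refine ⟨fun hinj u v huv ↦ ?_, hf.injective⟩
  obtain ⟨c, hc⟩ := hf.exists_map_single
  have hsingle : f (single u (c v : R)) = f (single v (c u : R)) := by
    rw [hc, hc, huv, mul_comm]
  exact ((single_inj.1 (hinj hsingle)).resolve_right fun h ↦ (c v).ne_zero h.1).1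

lemma surjective_iff [Nontrivial R] (hf : IsMonomialMap f M) :
    Surjective f ↔ Surjective M := by
  refine ⟨fun hsurj w ↦ ?_, hf.surjective⟩
  obtain ⟨a, ha⟩ := hsurj (single w 1)
  by_contra hw
  have hzero := hf.coeff_map_eq_zero a hw
  rw [ha, coeff_single, Finsupp.single_eq_same] at hzero
  exact one_ne_zero hzero

lemma bijective_iff [Nontrivial R] (hf : IsMonomialMap f M) : Bijective f ↔ Bijective M :=
  and_congr hf.injective_iff hf.surjective_iff

end IsMonomialMap

lemma isUnit_single_one [AddCommGroup G] (u : G) : IsUnit (single u (1 : R)) :=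
  (Group.isUnit (Multiplicative.ofAdd u)).map (AddMonoidAlgebra.of R G)

lemma exists_isMonomialMap [IsDomain R] [AddCommGroup G] [AddCommGroup H] [TwoUniqueSums H]
    (f : R[G] →ₐ[R] R[H]) : ∃ M : G →ₗ[ℤ] H, IsMonomialMap f M := by
  choose M c hMc using fun u ↦ exists_eq_single_of_isUnit ((isUnit_single_one u).map f)
  have map_add (u v : G) : M (u + v) = M u + M v := by
    have h : f (single (u + v) 1) = f (single u 1) * f (single v 1) := by
      rw [← map_mul, single_mul_single, one_mul]
    rw [hMc, hMc, hMc, single_mul_single, single_inj] at h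
    exact (h.resolve_right fun h0 ↦ (c (u + v)).ne_zero h0.1).1
  exact ⟨(AddMonoidHom.mk' M map_add).toIntLinearMap, fun u ↦ ⟨c u, hMc u⟩⟩

end MonomialMap

section FormBracket

variable {R G H : Type*} [CommRing R] [AddCommGroup G] [AddCommGroup H]

/-- `P` is the bracket on the group algebra `R[G]` given on monomials by
`{x^u, x^v} = B(u, v) x^(u+v)`, for an `R`-valued bilinear form `B` on the exponent group. -/
def IsFormBracket (B : G →ₗ[ℤ] G →ₗ[ℤ] R) (P : PoissonStructure R R[G]) : Prop :=
  ∀ u v, P.bracket (single u 1) (single v 1) = B u v • single (u + v) 1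

lemma _root_.IsTorusBracket.isFormBracket {n : ℕ} {Λ : Matrix (Fin n) (Fin n) R}
    {P : PoissonStructure R R[Fin n → ℤ]} (hP : IsTorusBracket n Λ P) :
    IsFormBracket (Matrix.toLinearMap₂' ℤ Λ) P := by
  intro u v
  rw [hP, Matrix.toLinearMap₂'_apply]
  simp only [zsmul_eq_mul, mul_left_comm, mul_assoc, mul_comm]

/-- `M` is an isometry from the form `B` to the form `B'`, not required to be injective: the trace
of a Poisson homomorphism on exponents. -/
def IsIsometry (B : G →ₗ[ℤ] G →ₗ[ℤ] R) (B' : H →ₗ[ℤ] H →ₗ[ℤ] R) (M : G →ₗ[ℤ] H) : Prop :=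
  ∀ u v, B' (M u) (M v) = B u v

variable {B : G →ₗ[ℤ] G →ₗ[ℤ] R} {B' : H →ₗ[ℤ] H →ₗ[ℤ] R}
  {P : PoissonStructure R R[G]} {P' : PoissonStructure R R[H]}

namespace IsFormBracket

lemma bracket_single (hP : IsFormBracket B P) (u v : G) (c d : R) :
    P.bracket (single u c) (single v d) = B u v • (single u c * single v d) := by
  calc P.bracket (single u c) (single v d)
      = P.bracket (c • single u 1) (d • single v 1) := by
        rw [smul_single, smul_single, smul_eq_mul, smul_eq_mul, mul_one, mul_one]
    _ = c • d • B u v • single (u + v) 1 := by rw [P.smul_left, P.smul_right, hP]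
    _ = B u v • (single u c * single v d) := by
        simp only [single_mul_single, smul_single, smul_eq_mul]
        ring_nf

lemma form_eq_neg [Nontrivial R] (hP : IsFormBracket B P) (u v : G) : B u v = -B v u := by
  have h := P.antisymm (single u 1) (single v 1)
  rw [hP, hP, add_comm v u, ← neg_smul, smul_single, smul_single, single_right_inj] at h
  simpa using h

lemma isRefl [Nontrivial R] (hP : IsFormBracket B P) : B.IsRefl := fun u v h ↦ by
  rw [hP.form_eq_neg, h, neg_zero]

end IsFormBracket

lemma IsMonomialMap.isPoissonHom_iff {f : R[G] →ₐ[R] R[H]} {M : G →ₗ[ℤ] H}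
    (hf : IsMonomialMap f M) (hP : IsFormBracket B P) (hP' : IsFormBracket B' P') :
    IsPoissonHom P P' f ↔ IsIsometry B B' M := by
  rw [isPoissonHom_iff_single]
  refine forall₂_congr fun u v ↦ ?_
  obtain ⟨c, hc⟩ := hf u
  obtain ⟨d, hd⟩ := hf v
  rw [hP.bracket_single, map_smul, map_mul, hc, hd, hP'.bracket_single, single_mul_single,
    smul_single, smul_single, single_right_inj, eq_comm]
  exact (c * d).mul_left_inj

end FormBracket

section RigidForm

variable {R G : Type*} [CommRing R] [AddCommGroup G] {B : G →ₗ[ℤ] G →ₗ[ℤ] R}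

lemma IsIsometry.injective {M : G →ₗ[ℤ] G} (hM : IsIsometry B B M) (hB : B.SeparatingLeft) :
    Injective M := by
  rw [injective_iff_map_eq_zero]
  intro u hu
  refine hB u fun v ↦ ?_
  rw [← hM, hu, map_zero, LinearMap.zero_apply]

/-- The form `B` is rigid if each of its injective self-isometries is bijective; this is the
Dixmier property read off on exponents. -/
def IsRigidForm (B : G →ₗ[ℤ] G →ₗ[ℤ] R) : Prop :=
  ∀ M : G →ₗ[ℤ] G, IsIsometry B B M → Injective M → Bijective M

lemma isIsometry_transvection (hB : B.IsRefl) {u : G} (hu : ∀ v, B u v = 0)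
    (φ : Module.Dual ℤ G) : IsIsometry B B (LinearMap.transvection φ u) := by
  intro v w
  have hu' : B v u = 0 := hB _ _ (hu v)
  simp [LinearMap.transvection.apply, hu, hu']

lemma injective_transvection {φ : Module.Dual ℤ G} {u : G} (hφ : 1 + φ u ≠ 0) :
    Injective (LinearMap.transvection φ u) := by
  rw [injective_iff_map_eq_zero]
  intro v hv
  rw [LinearMap.transvection.apply] at hv
  have hφv : φ v * (1 + φ u) = 0 := by
    rw [mul_one_add, ← smul_eq_mul (φ v) (φ u), ← map_smul, ← map_add, hv, map_zero]
  rwa [(mul_eq_zero_iff_right hφ).1 hφv, zero_smul, add_zero] at hv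

lemma one_add_dvd_of_surjective_transvection {φ : Module.Dual ℤ G} {u : G}
    (h : Surjective (LinearMap.transvection φ u)) : 1 + φ u ∣ φ u := by
  obtain ⟨v, hv⟩ := h u
  refine ⟨φ v, ?_⟩
  rw [LinearMap.transvection.apply] at hv
  nth_rw 1 [← hv]
  rw [map_add, map_smul, smul_eq_mul]
  ring

lemma IsRigidForm.separatingLeft [Module.Free ℤ G] (hrigid : IsRigidForm B) (hB : B.IsRefl) :
    B.SeparatingLeft := by
  intro u hu
  by_contra hne
  obtain ⟨ψ, hψ⟩ := Module.Projective.exists_dual_ne_zero ℤ hne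
  let φ : Module.Dual ℤ G := ψ u • ψ
  have hφ : 0 < φ u := mul_self_pos.2 hψ
  have hsurj : Surjective (LinearMap.transvection φ u) :=
    hrigid _ (isIsometry_transvection hB hu φ) (injective_transvection (by omega)) |>.2
  have hle := Int.le_of_dvd hφ (one_add_dvd_of_surjective_transvection hsurj)
  omega

lemma isRigidForm_iff_forall_bijective [Module.Free ℤ G] (hB : B.IsRefl) :
    IsRigidForm B ↔ ∀ M : G →ₗ[ℤ] G, IsIsometry B B M → Bijective M :=
  ⟨fun h M hM ↦ h M hM (hM.injective (h.separatingLeft hB)),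
    fun h M hM _ ↦ h M hM⟩

end RigidForm

section PoissonEndomorphism

variable {R G : Type*} [CommRing R] [IsDomain R] [AddCommGroup G] [TwoUniqueSums G]
  {B : G →ₗ[ℤ] G →ₗ[ℤ] R} {P : PoissonStructure R R[G]}

lemma IsFormBracket.forall_poissonEnd_iff (hP : IsFormBracket B P)
    {p : (R[G] → R[G]) → Prop} {q : (G → G) → Prop}
    (hpq : ∀ (f : R[G] →ₐ[R] R[G]) (M : G →ₗ[ℤ] G), IsMonomialMap f M → (p f ↔ q M)) :
    (∀ f : R[G] →ₐ[R] R[G], IsPoissonHom P P f → p f) ↔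
      ∀ M : G →ₗ[ℤ] G, IsIsometry B B M → q M := by
  constructor
  · intro h M hM
    have hmono : IsMonomialMap (mapDomainAlgHom R R M.toAddMonoidHom) M :=
      isMonomialMap_mapDomainAlgHom M.toAddMonoidHom
    exact (hpq _ M hmono).1 (h _ ((hmono.isPoissonHom_iff hP hP).2 hM))
  · intro h f hf
    obtain ⟨M, hmono⟩ := exists_isMonomialMap f
    exact (hpq f M hmono).2 (h M ((hmono.isPoissonHom_iff hP hP).1 hf))

lemma IsFormBracket.isDixmier_iff_isRigidForm (hP : IsFormBracket B P) :
    IsDixmier R R[G] P ↔ IsRigidForm B :=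
  hP.forall_poissonEnd_iff (p := fun f ↦ Injective f → Bijective f)
    (q := fun M ↦ Injective M → Bijective M) fun _ _ h ↦
    imp_congr h.injective_iff h.bijective_iff

lemma IsFormBracket.forall_poissonEnd_bijective_iff_isRigidForm [Module.Free ℤ G]
    (hP : IsFormBracket B P) :
    (∀ f : R[G] →ₐ[R] R[G], IsPoissonHom P P f → Bijective f) ↔ IsRigidForm B :=
  (hP.forall_poissonEnd_iff fun _ _ h ↦ h.bijective_iff).trans
    (isRigidForm_iff_forall_bijective hP.isRefl).symm

end PoissonEndomorphism

section SmithNormalForm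

variable {G ι : Type*} [AddCommGroup G]

lemma exists_basis_map_eq_smul [Finite ι] (b₀ : Module.Basis ι ℤ G) {M : G →ₗ[ℤ] G}
    (hM : Injective M) :
    ∃ (v b : Module.Basis ι ℤ G) (p : ι → ℕ), (∀ i, 0 < p i) ∧ ∀ i, M (v i) = (p i : ℤ) • b i := by
  have := Module.Finite.of_basis b₀
  have := Module.Free.of_basis b₀
  let e : G ≃ₗ[ℤ] LinearMap.range M := LinearEquiv.ofInjective M hM
  obtain ⟨b, a, b', hb⟩ := Submodule.exists_smith_normal_form_of_rank_eq b₀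
    (N := LinearMap.range M) e.symm.finrank_eq
  let v := b'.map e.symm
  have hv (i : ι) : M (v i) = a i • b i := by
    rw [← hb i, ← e.apply_symm_apply (b' i)]
    rfl
  have ha (i : ι) : a i ≠ 0 := by
    intro h
    refine v.ne_zero i (hM ?_)
    rw [hv, h, zero_smul, map_zero]
  have isUnit_sign (i : ι) : IsUnit (a i).sign :=
    Int.isUnit_iff_natAbs_eq.2 (Int.natAbs_sign_of_ne_zero (ha i))
  refine ⟨v, b.isUnitSMul isUnit_sign, fun i ↦ (a i).natAbs, fun i ↦ Int.natAbs_pos.2 (ha i),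
    fun i ↦ ?_⟩
  rw [hv, Module.Basis.isUnitSMul_apply, smul_smul, mul_comm, Int.sign_mul_natAbs]

variable [Fintype ι] [DecidableEq ι]

lemma exists_eq_toLin_diagonal_mul (b₀ : Module.Basis ι ℤ G) {M : G →ₗ[ℤ] G} (hM : Injective M) :
    ∃ (b : Module.Basis ι ℤ G) (p : ι → ℕ) (g : Matrix ι ι ℤ), (∀ i, 0 < p i) ∧ IsUnit g.det ∧
      M = Matrix.toLin b b (Matrix.diagonal (fun i ↦ (p i : ℤ)) * g) := by
  obtain ⟨v, b, p, hp, hv⟩ := exists_basis_map_eq_smul b₀ hM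
  have hdiag : LinearMap.toMatrix v b M = Matrix.diagonal fun i ↦ (p i : ℤ) := by
    ext i j
    rw [LinearMap.toMatrix_apply, hv, map_smul, b.repr_self, Finsupp.smul_single, smul_eq_mul,
      mul_one, Finsupp.single_apply, Matrix.diagonal_apply]
    split_ifs <;> simp_all
  refine ⟨b, p, v.toMatrix b, hp, ?_, ?_⟩
  · rw [← Module.Basis.det_apply]
    exact v.isUnit_det b
  · rw [← hdiag, linearMap_toMatrix_mul_basis_toMatrix, Matrix.toLin_toMatrix]

lemma injective_toLin {R V : Type*} [CommRing R] [IsDomain R] [AddCommGroup V] [Module R V]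
    (b : Module.Basis ι R V) {T : Matrix ι ι R} (hT : T.det ≠ 0) :
    Injective (Matrix.toLin b b T) := by
  intro x y hxy
  refine b.repr.injective (DFunLike.coe_injective (Matrix.mulVec_injective_of_det_ne_zero hT ?_))
  simpa only [← LinearMap.toMatrix_mulVec_repr b b, LinearMap.toMatrix_toLin] using
    congrArg (fun z ↦ (b.repr z : ι → R)) hxy

lemma bijective_toLin_iff {R V : Type*} [CommRing R] [AddCommGroup V] [Module R V]
    (b : Module.Basis ι R V) {T : Matrix ι ι R} :
    Bijective (Matrix.toLin b b T) ↔ IsUnit T.det := by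
  have := Module.Finite.of_basis b
  have := Module.Free.of_basis b
  rw [← Module.End.isUnit_iff, LinearMap.isUnit_iff_isUnit_det, LinearMap.det_toLin]

lemma bijective_toLin_diagonal_mul_iff (b : Module.Basis ι ℤ G) {g : Matrix ι ι ℤ}
    (hg : IsUnit g.det) (p : ι → ℕ) :
    Bijective (Matrix.toLin b b (Matrix.diagonal (fun i ↦ (p i : ℤ)) * g)) ↔ ∀ i, p i = 1 := by
  rw [bijective_toLin_iff, Matrix.det_mul, Matrix.det_diagonal, hg.mul_right_iff,
    IsUnit.prod_univ_iff]
  simp only [Int.ofNat_isUnit, Nat.isUnit_iff]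

end SmithNormalForm

section MatrixCriterion

variable {R G ι : Type*} [CommRing R] [AddCommGroup G] [Fintype ι] [DecidableEq ι]
  {B : G →ₗ[ℤ] G →ₗ[ℤ] R}

lemma isIsometry_toLin_iff (b : Module.Basis ι ℤ G) (T : Matrix ι ι ℤ) :
    IsIsometry B B (Matrix.toLin b b T) ↔
      ∀ i j, B (b i) (b j) = ∑ s, ∑ t, (T s i : R) * (T t j : R) * B (b s) (b t) := by
  have form_toLin (i j : ι) : B (Matrix.toLin b b T (b i)) (Matrix.toLin b b T (b j)) =
      ∑ s, ∑ t, (T s i : R) * (T t j : R) * B (b s) (b t) := by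
    rw [Matrix.toLin_self, Matrix.toLin_self]
    simp only [map_sum, map_smul, LinearMap.sum_apply, LinearMap.smul_apply, Finset.smul_sum,
      zsmul_eq_mul, mul_assoc]
    rw [Finset.sum_comm]
    exact Finset.sum_congr rfl fun s _ ↦ Finset.sum_congr rfl fun t _ ↦ mul_left_comm _ _ _
  refine ⟨fun h i j ↦ by rw [← form_toLin, h], fun h ↦ ?_⟩
  have hext : B.compl₁₂ (Matrix.toLin b b T) (Matrix.toLin b b T) = B :=
    LinearMap.ext_basis b b fun i j ↦ by rw [LinearMap.compl₁₂_apply, form_toLin, ← h]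
  exact LinearMap.congr_fun₂ hext

lemma isRigidForm_iff_matrix (b₀ : Module.Basis ι ℤ G) :
    IsRigidForm B ↔ ∀ (b : Module.Basis ι ℤ G) (g : Matrix ι ι ℤ), IsUnit g.det →
      ∀ p : ι → ℕ, (∀ i, 0 < p i) →
      (∀ i j, B (b i) (b j) = ∑ s, ∑ t,
        ((p s : R) * (p t : R) * (g s i : R) * (g t j : R)) * B (b s) (b t)) →
      ∀ i, p i = 1 := by
  have isIsometry_iff (b : Module.Basis ι ℤ G) (g : Matrix ι ι ℤ) (p : ι → ℕ) :
      IsIsometry B B (Matrix.toLin b b (Matrix.diagonal (fun i ↦ (p i : ℤ)) * g)) ↔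
        ∀ i j, B (b i) (b j) = ∑ s, ∑ t,
          ((p s : R) * (p t : R) * (g s i : R) * (g t j : R)) * B (b s) (b t) := by
    rw [isIsometry_toLin_iff]
    simp only [Matrix.diagonal_mul, Int.cast_mul, Int.cast_natCast, mul_assoc, mul_left_comm]
  constructor
  · intro h b g hg p hp hform
    rw [← bijective_toLin_diagonal_mul_iff b hg]
    refine h _ ((isIsometry_iff b g p).2 hform) (injective_toLin b ?_)
    rw [Matrix.det_mul, Matrix.det_diagonal]
    exact mul_ne_zero (Finset.prod_ne_zero_iff.2 fun i _ ↦ by exact_mod_cast (hp i).ne') hg.ne_zero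
  · intro h M hM hinj
    obtain ⟨b, p, g, hp, hg, rfl⟩ := exists_eq_toLin_diagonal_mul b₀ hinj
    exact (bijective_toLin_diagonal_mul_iff b hg p).2 (h b g hg p hp ((isIsometry_iff b g p).1 hM))

end MatrixCriterion

section Generators

variable {R ι : Type*} [CommRing R]

lemma adjoin_range_single_eq_top_iff [Nontrivial R] {G : Type*} [AddCommMonoid G] (u : ι → G)
    (c : ι → Rˣ) :
    Algebra.adjoin R (Set.range fun i ↦ single (u i) (c i : R)) = ⊤ ↔
      AddSubmonoid.closure (Set.range u) = ⊤ := by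
  set S := Algebra.adjoin R (Set.range fun i ↦ single (u i) (c i : R))
  set N := AddSubmonoid.closure (Set.range u)
  constructor
  · intro hS
    have hmono := isMonomialMap_mapDomainAlgHom (R := R) N.subtype
    have hle : S ≤ (mapDomainAlgHom R R N.subtype).range := by
      rw [Algebra.adjoin_le_iff]
      rintro _ ⟨i, rfl⟩
      exact ⟨single ⟨u i, AddSubmonoid.subset_closure ⟨i, rfl⟩⟩ (c i : R), mapDomain_single⟩
    have hsurj : Surjective (mapDomainAlgHom R R N.subtype) := by
      rw [← AlgHom.range_eq_top, eq_top_iff, ← hS]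
      exact hle
    rw [← N.mrange_subtype, AddMonoidHom.mrange_eq_top]
    exact hmono.surjective_iff.1 hsurj
  · intro hN
    have single_mem (w : G) : single w 1 ∈ S := by
      induction (hN ▸ AddSubmonoid.mem_top w : w ∈ N) using AddSubmonoid.closure_induction with
      | mem w hw =>
        obtain ⟨i, rfl⟩ := hw
        have hmem : single (u i) (c i : R) ∈ S := Algebra.subset_adjoin ⟨i, rfl⟩
        simpa using S.smul_mem hmem (↑(c i)⁻¹ : R)
      | zero => exact one_def (R := R) (M := G) ▸ S.one_mem
      | add v w _ _ hv hw => simpa [single_mul_single] using S.mul_mem hv hw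
    rw [eq_top_iff]
    intro a _
    induction a using AddMonoidAlgebra.induction_linear with
    | zero => exact S.zero_mem
    | add a b ha hb => exact S.add_mem (ha trivial) (hb trivial)
    | single w r => simpa using S.smul_mem (single_mem w) r

variable {G : Type*} [AddCommGroup G]

lemma units_val_inv_eq_single {z : R[G]ˣ} {u : G} {c : Rˣ} (hz : (z : R[G]) = single u (c : R)) :
    ((z⁻¹ : R[G]ˣ) : R[G]) = single (-u) (↑c⁻¹ : R) :=
  Units.inv_eq_of_mul_eq_one_right (by
    rw [hz, single_mul_single, add_neg_cancel, Units.mul_inv, one_def])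

lemma addSubmonoid_closure_range_union_range_neg_eq_top_iff (u : ι → G) :
    AddSubmonoid.closure (Set.range u ∪ Set.range fun i ↦ -u i) = ⊤ ↔
      Submodule.span ℤ (Set.range u) = ⊤ := by
  have hneg : (Set.range fun i ↦ -u i) = -Set.range u := by
    rw [← Set.image_neg_eq_neg, ← Set.range_comp]
    rfl
  rw [hneg, ← AddSubgroup.closure_toAddSubmonoid, ← Submodule.toAddSubgroup_inj,
    Submodule.span_int_eq_addSubgroupClosure]
  exact AddSubgroup.toAddSubmonoid_inj (q := ⊤)

lemma adjoin_units_eq_top_iff_span_eq_top [Nontrivial R] {z : ι → R[G]ˣ} {u : ι → G} {c : ι → Rˣ}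
    (hz : ∀ i, (z i : R[G]) = single (u i) (c i : R)) :
    Algebra.adjoin R ((Set.range fun i ↦ (z i : R[G])) ∪
        Set.range fun i ↦ ((z i)⁻¹ : R[G]ˣ).val) = ⊤ ↔
      Submodule.span ℤ (Set.range u) = ⊤ := by
  have h := adjoin_range_single_eq_top_iff (R := R) (Sum.elim u fun i ↦ -u i)
    (Sum.elim c fun i ↦ (c i)⁻¹)
  rw [Set.Sum.elim_range, addSubmonoid_closure_range_union_range_neg_eq_top_iff] at h
  have hsum : (Sum.elim (fun i ↦ (z i : R[G])) fun i ↦ ((z i)⁻¹ : R[G]ˣ).val) =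
      fun i ↦ single (Sum.elim u (fun i ↦ -u i) i) ((Sum.elim c (fun i ↦ (c i)⁻¹) i : Rˣ) : R) := by
    funext i
    rcases i with i | i
    exacts [hz i, units_val_inv_eq_single (hz i)]
  rw [← h, ← Set.Sum.elim_range, hsum]

end Generators

section Torus

variable {𝕜 : Type*} [Field 𝕜] {n : ℕ} {P : PoissonStructure 𝕜 𝕜[Fin n → ℤ]}

lemma IsFormBracket.torusMatrixCondition_iff
    {B : (Fin n → ℤ) →ₗ[ℤ] (Fin n → ℤ) →ₗ[ℤ] 𝕜} (hP : IsFormBracket B P) :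
    TorusMatrixCondition n P ↔
      ∀ (b : Module.Basis (Fin n) ℤ (Fin n → ℤ)) (g : Matrix (Fin n) (Fin n) ℤ), IsUnit g.det →
        ∀ p : Fin n → ℕ, (∀ i, 0 < p i) →
        (∀ i j, B (b i) (b j) = ∑ s, ∑ t,
          ((p s : 𝕜) * (p t : 𝕜) * (g s i : 𝕜) * (g t j : 𝕜)) * B (b s) (b t)) →
        ∀ i, p i = 1 := by
  constructor
  · intro h b
    let z (i : Fin n) : 𝕜[Fin n → ℤ]ˣ := (isUnit_single_one (b i)).unit
    refine h z (Matrix.of fun i j ↦ B (b i) (b j)) ?_ ?_ ?_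
    · ext i j
      exact hP.form_eq_neg (b j) (b i)
    · exact (adjoin_units_eq_top_iff_span_eq_top (u := b) (c := 1) fun _ ↦ rfl).2 b.span_eq
    · exact fun i j ↦ hP.bracket_single _ _ _ _
  · intro h z Λ' _ hgen hbracket
    choose u c hz using fun i ↦ exists_eq_single_of_isUnit (z i).isUnit
    have hspan : Submodule.span ℤ (Set.range u) = ⊤ :=
      (adjoin_units_eq_top_iff_span_eq_top hz).1 hgen
    let b : Module.Basis (Fin n) ℤ (Fin n → ℤ) :=
      basisOfTopLeSpanOfCardEqFinrank u hspan.ge (by simp)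
    have hb : ⇑b = u := coe_basisOfTopLeSpanOfCardEqFinrank u hspan.ge _
    have hΛ' (i j : Fin n) : Λ' i j = B (b i) (b j) := by
      have hij := hbracket i j
      rw [hz, hz, hP.bracket_single, single_mul_single, smul_single, smul_single,
        single_right_inj] at hij
      rw [hb]
      exact ((c i * c j).mul_left_inj.1 hij).symm
    simpa only [hΛ'] using h b

end Torus

end PoissonTorus

theorem simple_poissonTorus_dixmier_tfae_general
    {𝕜 : Type*} [Field 𝕜] (n : ℕ) (Λ : Matrix (Fin n) (Fin n) 𝕜)
    (P : PoissonStructure 𝕜 (AddMonoidAlgebra 𝕜 (Fin n → ℤ)))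
    (hP : IsTorusBracket n Λ P) :
    [TorusEndosBijective n P, IsDixmier 𝕜 𝕜[Fin n → ℤ] P, TorusPoissonSubalgebrasRigid n P,
      TorusMatrixCondition n P].TFAE := by
  have hB := hP.isFormBracket
  tfae_have 1 ↔ 2 :=
    hB.forall_poissonEnd_bijective_iff_isRigidForm.trans hB.isDixmier_iff_isRigidForm.symm
  tfae_have 2 ↔ 3 := PoissonTorus.isDixmier_iff_forall_subalgebra_eq_top P
  tfae_have 2 ↔ 4 := by
    rw [hB.isDixmier_iff_isRigidForm, hB.torusMatrixCondition_iff]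
    exact PoissonTorus.isRigidForm_iff_matrix (Pi.basisFun ℤ (Fin n))
  tfae_finish

/-- Lemma 2.8: for a simple Poisson torus, conditions (1), (2) and (3) are equivalent. -/
theorem simple_poissonTorus_dixmier_tfae
    {𝕜 : Type*} [Field 𝕜] [CharZero 𝕜] (n : ℕ) (Λ : Matrix (Fin n) (Fin n) 𝕜)
    (hskew : Λ.transpose = -Λ)
    (P : PoissonStructure 𝕜 (AddMonoidAlgebra 𝕜 (Fin n → ℤ)))
    (hP : IsTorusBracket n Λ P)
    (hsimple : IsPoissonSimple P) :
    (TorusEndosBijective n P ↔ TorusPoissonSubalgebrasRigid n P) ∧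
    (TorusPoissonSubalgebrasRigid n P ↔ TorusMatrixCondition n P) := by
  have h := simple_poissonTorus_dixmier_tfae_general n Λ P hP
  exact ⟨h.out 0 2, h.out 2 3⟩
end
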